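/- There is a countable family (D_i)_{i∈ℕ} of clones on {0,1,2} such that every clone on {0,1,2} all of whose operations preserve C_3 is minor equivalent to some D_i; i.e., minor equivalence has only countably many equivalence classes on the clones of self-dual operations. -/

import Mathlib

/-- The three-element domain `{0,1,2}`. -/
abbrev D3 : Type := Fin 3

/-- `n`-ary operations on `{0,1,2}`. -/
abbrev Op (n : ℕ) : Type := (Fin n → D3) → D3

/-- An `n`-ary operation `f` preserves a `k`-ary relation `R`. -/
def Preserves {n k : ℕ} (f : Op n) (R : Set (Fin k → D3)) : Prop :=
  ∀ t : Fin n → (Fin k → D3), (∀ i, t i ∈ R) → (fun j => f fun i => t i j) ∈ R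

/-- `C₃ = {(0,1),(1,2),(2,0)}`. -/
def C3rel : Set (Fin 2 → D3) :=
  { t | (t 0 = 0 ∧ t 1 = 1) ∨ (t 0 = 1 ∧ t 1 = 2) ∨ (t 0 = 2 ∧ t 1 = 0) }

/-- A clone on `{0,1,2}`. -/
structure IsClone (C : ∀ n, Set (Op n)) : Prop where
  proj_mem : ∀ (n : ℕ) (i : Fin n), (fun x => x i) ∈ C n
  comp_mem : ∀ (n m : ℕ) (f : Op n) (g : Fin n → Op m),
    f ∈ C n → (∀ i, g i ∈ C m) → (fun x => f fun i => g i x) ∈ C m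

/-- The minor `f_π` of an `n`-ary operation `f` along `π`. -/
def minor {n r : ℕ} (f : Op n) (π : Fin n → Fin r) : Op r :=
  fun x => f fun i => x (π i)

/-- `ξ` is a minor-preserving map from `C` to `D`. -/
def IsMinorHom (C D : ∀ n, Set (Op n)) (ξ : ∀ n, Op n → Op n) : Prop :=
  (∀ n, ∀ f ∈ C n, ξ n f ∈ D n) ∧
  (∀ (n r : ℕ) (f : Op n) (π : Fin n → Fin r), f ∈ C n → ξ r (minor f π) = minor (ξ n f) π)

/-- Two clones are minor equivalent if there are minor-preserving maps in both directions. -/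
def MinorEquivalent (C D : ∀ n, Set (Op n)) : Prop :=
  (∃ ξ, IsMinorHom C D ξ) ∧ (∃ ξ, IsMinorHom D C ξ)

/-
Replacing every operation `f` by `f - f(0, …, 0)` reduces the problem to idempotent self-dual
clones. Clones with a near-unanimity operation are determined by their operations of one suitable
arity (Baker and Pixley), so there are only countably many of them. All other clones fall into
finitely many classes, and any two members of one class are related by minor-preserving maps in
both directions.

A clone with an operation that maps a two-element subset outside of itself contains the average
`-(x + y)`; without a near-unanimity operation it consists of all idempotent affine operations. In
all other clones, self-duality makes an operation act in the same way on each subset `{c, c + 1}`,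
which gives a Boolean operation, its trace. If the binary operations are projections, then the
traces are additive: either all of them are projections, and the trace is a minor-preserving map to
the clone of projections, or there is a minority operation, and `f(-x) - f(x)` lies in every clone
of this kind.

Otherwise, up to conjugation with `x ↦ -x`, the clone contains the minimum for the cyclic order
`0 < 1 < 2 < 0`, which is a meet on each `{c, c + 1}`. If some trace does not lie below a variable,
there is a near-unanimity operation. If some trace is not monotone, the clone consists of all
conservative operations whose traces lie below a variable. If all traces are monotone, then the
minor-preserving map forgets whatever is not determined by the trace: it replaces `f(a)` by the `v`
such that the trace of `f` accepts the set where `a` lies in `{v, v + 1}` but not the one where `a`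
lies in `{v + 1, v + 2}`, whenever such a `v` exists. The classes that remain are distinguished by
the ternary trace `x ∧ (y ∨ z)` and by whether the operations with a conjunction as their trace
depend on variables outside of that conjunction.
-/

namespace SelfDualClone

/-- A set of operations on `{0,1,2}`, sorted by arity. -/
abbrev OpFamily : Type := ∀ n, Set (Op n)

variable {C C' : OpFamily} {I J ι : Type*}

/-! ### Term operations -/

/-- `f` is a term operation of `C`: substituting members of `C` for its variables gives a member
of `C`. The variables are indexed by an arbitrary type, so that no enumeration is needed. -/
def IsTerm (C : OpFamily) (f : (I → D3) → D3) : Prop :=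
  ∀ ⦃n⦄ (p : I → Op n), (∀ i, p i ∈ C n) → (fun x => f fun i => p i x) ∈ C n

theorem isTerm_proj (i : I) : IsTerm C (fun x : I → D3 => x i) := fun _ _ hp => hp i

theorem IsTerm.comp {f : (I → D3) → D3} {g : I → (J → D3) → D3} (hf : IsTerm C f)
    (hg : ∀ i, IsTerm C (g i)) : IsTerm C (fun x => f fun i => g i x) :=
  fun _ p hp => hf (fun i x => g i fun j => p j x) fun i => hg i p hp

theorem IsTerm.minor {f : (I → D3) → D3} (hf : IsTerm C f) (π : I → J) :
    IsTerm C (fun x : J → D3 => f fun i => x (π i)) :=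
  hf.comp fun i => isTerm_proj (π i)

/-- Binary term operations, in curried form. -/
abbrev IsTerm₂ (C : OpFamily) (g : D3 → D3 → D3) : Prop :=
  IsTerm C fun x : Fin 2 → D3 => g (x 0) (x 1)

/-- Ternary term operations, in curried form. -/
abbrev IsTerm₃ (C : OpFamily) (g : D3 → D3 → D3 → D3) : Prop :=
  IsTerm C fun x : Fin 3 → D3 => g (x 0) (x 1) (x 2)

/-- Quaternary term operations, in curried form. -/
abbrev IsTerm₄ (C : OpFamily) (g : D3 → D3 → D3 → D3 → D3) : Prop :=
  IsTerm C fun x : Fin 4 → D3 => g (x 0) (x 1) (x 2) (x 3)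

section Substitution

variable {f₀ f₁ f₂ f₃ : (I → D3) → D3}

theorem IsTerm₂.app {g : D3 → D3 → D3} (hg : IsTerm₂ C g) (h₀ : IsTerm C f₀)
    (h₁ : IsTerm C f₁) : IsTerm C fun x => g (f₀ x) (f₁ x) :=
  IsTerm.comp (g := ![f₀, f₁]) hg (Fin.forall_fin_two.2 ⟨h₀, h₁⟩)

theorem IsTerm₃.app {g : D3 → D3 → D3 → D3} (hg : IsTerm₃ C g) (h₀ : IsTerm C f₀)
    (h₁ : IsTerm C f₁) (h₂ : IsTerm C f₂) : IsTerm C fun x => g (f₀ x) (f₁ x) (f₂ x) :=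
  IsTerm.comp (g := ![f₀, f₁, f₂]) hg (by simpa [Fin.forall_fin_succ] using ⟨h₀, h₁, h₂⟩)

theorem IsTerm₄.app {g : D3 → D3 → D3 → D3 → D3} (hg : IsTerm₄ C g) (h₀ : IsTerm C f₀)
    (h₁ : IsTerm C f₁) (h₂ : IsTerm C f₂) (h₃ : IsTerm C f₃) :
    IsTerm C fun x => g (f₀ x) (f₁ x) (f₂ x) (f₃ x) :=
  IsTerm.comp (g := ![f₀, f₁, f₂, f₃]) hg (by simpa [Fin.forall_fin_succ] using ⟨h₀, h₁, h₂, h₃⟩)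

theorem IsTerm.ite {f : (I → D3) → D3} {u v : (J → D3) → D3} (hf : IsTerm C f) (a : I → Prop)
    [DecidablePred a] (hu : IsTerm C u) (hv : IsTerm C v) :
    IsTerm C fun x => f fun i => if a i then u x else v x :=
  hf.comp (g := fun i x => if a i then u x else v x) fun i => by by_cases h : a i <;> simpa [h]

end Substitution

/-- `f` commutes with the rotation `x ↦ x + 1` of `{0,1,2}`. -/
def IsEquivariant (f : (I → D3) → D3) : Prop := ∀ x, f (fun i => x i + 1) = f x + 1

theorem IsEquivariant.add {f : (I → D3) → D3} (hf : IsEquivariant f) (x : I → D3) (c : D3) :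
    f (fun i => x i + c) = f x + c := by
  obtain rfl | rfl | rfl : c = 0 ∨ c = 1 ∨ c = 1 + 1 := by decide +revert
  · simp only [add_zero]
  · exact hf x
  · simp only [← add_assoc, hf fun i => x i + 1, hf x]

/-- The idempotent self-dual clones. -/
structure IsSelfDualIdem (C : OpFamily) : Prop where
  clone : IsClone C
  add_one : ∀ {n}, ∀ f ∈ C n, ∀ x, f (fun i => x i + 1) = f x + 1
  const : ∀ {n}, ∀ f ∈ C n, ∀ c, f (fun _ => c) = c

namespace IsSelfDualIdem

variable (hC : IsSelfDualIdem C) {f : (I → D3) → D3}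
include hC

theorem isTerm_iff_mem {n : ℕ} {f : Op n} : IsTerm C f ↔ f ∈ C n :=
  ⟨fun h => h (fun i x => x i) (hC.clone.proj_mem n), fun h m p => hC.clone.comp_mem n m f p h⟩

theorem isTerm_const (hf : IsTerm C f) (c : D3) : f (fun _ => c) = c :=
  hC.const _ (hC.isTerm_iff_mem.1 (hf.minor fun _ => (0 : Fin 1))) c

theorem isTerm_add_one (hf : IsTerm C f) (x : I → D3) : f (fun i => x i + 1) = f x + 1 :=
  hC.add_one _ (hC.isTerm_iff_mem.1 (hf.minor x)) id

theorem isTerm_add (hf : IsTerm C f) (x : I → D3) (c : D3) :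
    f (fun i => x i + c) = f x + c :=
  IsEquivariant.add (hC.isTerm_add_one hf) x c

theorem nonempty_of_isTerm (hf : IsTerm C f) : Nonempty I := by
  by_contra hI
  rw [not_nonempty_iff] at hI
  have h01 : (0 : D3) = 1 := by
    rw [← hC.isTerm_const hf 0, ← hC.isTerm_const hf 1, Subsingleton.elim fun _ : I => (0 : D3)]
  exact absurd h01 (by decide)

end IsSelfDualIdem

/-! ### Minor equivalence classes -/

/-- There is a minor-preserving map from `C` to `C'`. -/
def MinorLE (C C' : OpFamily) : Prop := ∃ ξ, IsMinorHom C C' ξ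

theorem MinorLE.of_subset (h : ∀ n, C n ⊆ C' n) : MinorLE C C' :=
  ⟨fun _ f => f, fun n _ hf => h n hf, fun _ _ _ _ _ => rfl⟩

theorem MinorLE.trans {C'' : OpFamily} : MinorLE C C' → MinorLE C' C'' → MinorLE C C'' := by
  rintro ⟨ξ, hξ, hξ'⟩ ⟨η, hη, hη'⟩
  refine ⟨fun n f => η n (ξ n f), fun n f hf => hη n _ (hξ n f hf), fun n r f π hf => ?_⟩
  exact (congrArg (η r) (hξ' n r f π hf)).trans (hη' n r _ π (hξ n f hf))

/-- Minor equivalence as a setoid. -/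
def minorSetoid : Setoid OpFamily where
  r := MinorEquivalent
  iseqv :=
    { refl := fun _ => ⟨MinorLE.of_subset fun _ => le_rfl, MinorLE.of_subset fun _ => le_rfl⟩
      symm := And.symm
      trans := fun h h' => ⟨MinorLE.trans h.1 h'.1, MinorLE.trans h'.2 h.2⟩ }

/-- The minor equivalence class of a family of operations. -/
def minorClass (C : OpFamily) : Quotient minorSetoid := Quotient.mk _ C

theorem minorClass_eq_iff : minorClass C = minorClass C' ↔ MinorEquivalent C C' :=
  Quotient.eq (r := minorSetoid)

theorem countable_minorClass_of_minorLE {K : Set OpFamily}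
    (hK : ∀ C ∈ K, ∀ C' ∈ K, MinorLE C C') : (minorClass '' K).Countable := by
  refine Set.Subsingleton.countable ?_
  rintro _ ⟨C, hC, rfl⟩ _ ⟨C', hC', rfl⟩
  exact minorClass_eq_iff.2 ⟨hK C hC C' hC', hK C' hC' C hC⟩

theorem exists_nat_family_of_countable {K : Set OpFamily} (hne : K.Nonempty)
    (hK : (minorClass '' K).Countable) :
    ∃ D : ℕ → OpFamily, (∀ i, D i ∈ K) ∧ ∀ C ∈ K, ∃ i, MinorEquivalent C (D i) := by
  obtain ⟨c, hc⟩ := hK.exists_eq_range (hne.image _)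
  have hrep (i : ℕ) : c i ∈ minorClass '' K := hc ▸ Set.mem_range_self i
  choose D hDK hD using hrep
  refine ⟨D, hDK, fun C hCK => ?_⟩
  obtain ⟨i, hi⟩ : minorClass C ∈ Set.range c := hc ▸ Set.mem_image_of_mem _ hCK
  exact ⟨i, minorClass_eq_iff.1 (hi.symm.trans (hD i).symm)⟩

theorem isClone_proj : IsClone fun n => {f : Op n | ∃ i, f = fun x => x i} where
  proj_mem _ i := ⟨i, rfl⟩
  comp_mem := by
    rintro n m f g ⟨i, rfl⟩ hg
    exact hg i

/-! ### Reduction to idempotent clones -/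

theorem mem_C3rel_iff {t : Fin 2 → D3} : t ∈ C3rel ↔ t 1 = t 0 + 1 := by
  simp only [C3rel, Set.mem_ofPred_eq]
  generalize t 0 = a, t 1 = b
  decide +revert

theorem add_one_of_preserves_C3rel {n : ℕ} {f : Op n} (hf : Preserves f C3rel) (x : Fin n → D3) :
    f (fun i => x i + 1) = f x + 1 :=
  mem_C3rel_iff.1 (hf (fun i => ![x i, x i + 1]) fun _ => mem_C3rel_iff.2 rfl)

/-- The idempotent members of a family of self-dual operations. -/
def idemPart (C : OpFamily) : OpFamily := fun n => {f | f ∈ C n ∧ f (fun _ => 0) = 0}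

section IdemPart

variable (hC : IsClone C) (hsd : ∀ {n}, ∀ f ∈ C n, ∀ x, f (fun i => x i + 1) = f x + 1)
include hsd

theorem apply_const_of_add_one {n : ℕ} {f : Op n} (hf : f ∈ C n) (c : D3) :
    f (fun _ => c) = c + f (fun _ => 0) := by
  have h₁ := hsd f hf fun _ => 0
  have h₂ := hsd f hf fun _ => 0 + 1
  obtain rfl | rfl | rfl : c = 0 ∨ c = 0 + 1 ∨ c = 0 + 1 + 1 := by decide +revert
  · rw [zero_add]
  · rw [h₁, zero_add, add_comm]
  · rw [h₂, h₁, zero_add, add_comm, add_comm (f _), add_assoc]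

include hC

theorem isSelfDualIdem_idemPart : IsSelfDualIdem (idemPart C) where
  clone :=
    { proj_mem := fun n i => ⟨hC.proj_mem n i, rfl⟩
      comp_mem := fun n m f g hf hg =>
        ⟨hC.comp_mem n m f g hf.1 fun i => (hg i).1, by simpa only [(hg _).2] using hf.2⟩ }
  add_one f hf := hsd f hf.1
  const f hf c := by rw [apply_const_of_add_one hsd hf.1, hf.2, add_zero]

theorem sub_apply_zero_mem {n : ℕ} {f : Op n} (hf : f ∈ C n) :
    (fun x => f x - f fun _ => 0) ∈ C n := by
  have hcomp : IsTerm C f := fun m p hp => hC.comp_mem n m f p hf hp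
  have hfff : (fun x => f fun _ => f fun _ => f x) ∈ C n :=
    hcomp _ fun _ => hcomp _ fun _ => hf
  convert hfff using 2 with x
  rw [apply_const_of_add_one hsd hf (f fun _ => f x), apply_const_of_add_one hsd hf (f x)]
  have sub_eq (a b : D3) : a - b = a + b + b := by decide +revert
  exact sub_eq _ _

theorem minorClass_idemPart : minorClass (idemPart C) = minorClass C :=
  minorClass_eq_iff.2 ⟨MinorLE.of_subset fun _ _ hf => hf.1,
    fun _ f x => f x - f fun _ => 0,
    fun _ _ hf => ⟨sub_apply_zero_mem hC hsd hf, sub_self _⟩, fun _ _ _ _ _ => rfl⟩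

end IdemPart

/-! ### Conjugation with `x ↦ -x` -/

/-- The conjugates of the members of `C` under the permutation `x ↦ -x` of `{0,1,2}`. -/
def negConj (C : OpFamily) : OpFamily := fun n => {f | (fun x => -f fun i => -x i) ∈ C n}

theorem minorClass_negConj : minorClass (negConj C) = minorClass C :=
  minorClass_eq_iff.2
    ⟨⟨fun _ f x => -f fun i => -x i, fun _ _ hf => hf, fun _ _ _ _ _ => rfl⟩,
      fun _ f x => -f fun i => -x i,
      fun _ f hf => by simpa only [negConj, Set.mem_ofPred_eq, neg_neg] using hf,
      fun _ _ _ _ _ => rfl⟩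

theorem isSelfDualIdem_negConj (hC : IsSelfDualIdem C) : IsSelfDualIdem (negConj C) where
  clone :=
    { proj_mem := fun n i => by
        simpa only [negConj, Set.mem_ofPred_eq, neg_neg] using hC.clone.proj_mem n i
      comp_mem := fun n m f g hf hg => by
        simpa only [negConj, Set.mem_ofPred_eq, neg_neg] using hC.clone.comp_mem n m _ _ hf hg }
  add_one f hf x := by
    have h := hC.isTerm_add (hC.isTerm_iff_mem.2 hf) (fun i => -x i) (-1)
    simp only [← neg_add, neg_neg] at h
    exact neg_injective h
  const f hf c := by
    have h := hC.const _ hf (-c)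
    simp only [neg_neg] at h
    exact neg_injective h

/-! ### The Baker–Pixley theorem -/

/-- `h` is a near-unanimity operation: it returns `x` whenever all but at most one of its
arguments are equal to `x`. -/
def IsNearUnanimity (h : (I → D3) → D3) : Prop :=
  ∀ (x : D3) (i : I) (v : I → D3), (∀ j, j ≠ i → v j = x) → h v = x

/-- `C` has a near-unanimity operation of arity `k + 1`. -/
def HasNearUnanimity (C : OpFamily) (k : ℕ) : Prop := ∃ h ∈ C (k + 1), IsNearUnanimity h

theorem HasNearUnanimity.exists_eqOn {k n : ℕ} (hC : IsClone C) (hk : HasNearUnanimity C k)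
    {f : Op n} (hsmall : ∀ Y : Finset (Fin n → D3), Y.card ≤ k → ∃ g ∈ C n, Set.EqOn g f Y)
    (Y : Finset (Fin n → D3)) : ∃ g ∈ C n, Set.EqOn g f Y := by
  obtain ⟨h, hh, hnu⟩ := hk
  induction Y using Finset.strongInduction with
  | H Y ih =>
    rcases le_or_gt Y.card k with hY | hY
    · exact hsmall Y hY
    obtain ⟨p⟩ : Nonempty (Fin (k + 1) ↪ Y) :=
      Function.Embedding.nonempty_of_card_le (by simpa using hY)
    choose g hg hgf using fun j => ih (Y.erase (p j)) (Finset.erase_ssubset (p j).2)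
    refine ⟨_, hC.comp_mem _ n h g hh hg, fun y hy => ?_⟩
    obtain ⟨i, hi⟩ : ∃ i, ∀ j, j ≠ i → y ≠ p j := by
      by_cases hyp : ∃ i, y = p i
      · obtain ⟨i, rfl⟩ := hyp
        exact ⟨i, fun j hji hij => hji (p.injective (Subtype.ext hij.symm))⟩
      · exact ⟨0, fun j _ hj => hyp ⟨j, hj⟩⟩
    exact hnu _ i _ fun j hj => hgf j (Finset.mem_coe.2 (Finset.mem_erase.2 ⟨hi j hj, hy⟩))

/-- The values of `f` on `k` tuples are those of a minor of `f` of arity `3 ^ k`. -/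
theorem exists_eqOn_of_eq_pow {k n : ℕ} (hC : IsClone C) (hC' : IsClone C') [Nonempty (Fin n)]
    (hCC' : C (3 ^ k) = C' (3 ^ k)) {f : Op n} (hf : f ∈ C n) {Y : Finset (Fin n → D3)}
    (hY : Y.card ≤ k) : ∃ g ∈ C' n, Set.EqOn g f Y := by
  obtain ⟨e⟩ : Nonempty ((Y → D3) ↪ Fin (3 ^ k)) :=
    Function.Embedding.nonempty_of_card_le
      (by simpa using Nat.pow_le_pow_right (by norm_num) hY)
  let π (i : Fin n) : Fin (3 ^ k) := e fun y => y.1 i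
  let ρ : Fin (3 ^ k) → Fin n := Function.invFun π
  have hfπ : minor f π ∈ C' (3 ^ k) :=
    hCC' ▸ hC.comp_mem _ _ f _ hf fun i => hC.proj_mem _ (π i)
  refine ⟨minor (minor f π) ρ, hC'.comp_mem _ _ (minor f π) _ hfπ fun j => hC'.proj_mem _ (ρ j),
    fun y hy => congrArg f (funext fun i => ?_)⟩
  have hρ : π (ρ (π i)) = π i := Function.invFun_eq ⟨i, rfl⟩
  exact congrFun (e.injective hρ) ⟨y, hy⟩

theorem subset_of_hasNearUnanimity {k : ℕ} (hC : IsSelfDualIdem C) (hC' : IsSelfDualIdem C')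
    (hk : HasNearUnanimity C' k) (hCC' : C (3 ^ k) = C' (3 ^ k)) (n : ℕ) : C n ⊆ C' n := by
  intro f hf
  have := hC.nonempty_of_isTerm (hC.isTerm_iff_mem.2 hf)
  obtain ⟨g, hg, hgf⟩ := hk.exists_eqOn hC'.clone
    (fun _ hY => exists_eqOn_of_eq_pow hC.clone hC'.clone hCC' hf hY) Finset.univ
  have hgf' : g = f := funext fun y => hgf (Finset.mem_coe.2 (Finset.mem_univ y))
  exact hgf' ▸ hg

theorem countable_minorClass_hasNearUnanimity :
    (minorClass '' {C | IsSelfDualIdem C ∧ ∃ k, HasNearUnanimity C k}).Countable := by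
  have hcover : {C | IsSelfDualIdem C ∧ ∃ k, HasNearUnanimity C k} =
      ⋃ (k : ℕ) (R : Set (Op (3 ^ k))),
        {C | IsSelfDualIdem C ∧ HasNearUnanimity C k ∧ C (3 ^ k) = R} := by
    ext C
    simp
  rw [hcover, Set.image_iUnion₂]
  refine Set.countable_iUnion fun k => Set.countable_iUnion fun R => ?_
  refine countable_minorClass_of_minorLE ?_
  rintro C ⟨hC, -, rfl⟩ C' ⟨hC', hk, hR⟩
  exact MinorLE.of_subset (subset_of_hasNearUnanimity hC hC' hk hR.symm)

theorem eq_zero_or_one_or_two (c : D3) : c = 0 ∨ c = 1 ∨ c = 2 := by decide +revert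

/-! ### Conservative clones and the affine average -/

/-- Every member of `C` preserves `{0,1}`; by self-duality, it then preserves all two-element
subsets of `{0,1,2}`. -/
def IsConservative (C : OpFamily) : Prop :=
  ∀ n, ∀ f ∈ C n, ∀ x : Fin n → D3, (∀ i, x i = 0 ∨ x i = 1) → f x ≠ 2

/-- The affine average `(x + y) / 2` over the field with three elements. -/
def avg (x y : D3) : D3 := -(x + y)

/-- The idempotent self-dual binary operation mapping `(0, 1)` to `a` and `(0, 2)` to `b`. -/
def binop (a b x y : D3) : D3 := x + ![0, a, b] (y - x)

namespace IsSelfDualIdem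

variable (hC : IsSelfDualIdem C)
include hC

theorem isTerm₂_add {g : D3 → D3 → D3} (hg : IsTerm₂ C g) (x y c : D3) :
    g (x + c) (y + c) = g x y + c := by
  simpa using hC.isTerm_add hg ![x, y] c

theorem isTerm₃_add {g : D3 → D3 → D3 → D3} (hg : IsTerm₃ C g) (x y z c : D3) :
    g (x + c) (y + c) (z + c) = g x y z + c := by
  simpa using hC.isTerm_add hg ![x, y, z] c

theorem eq_binop {g : D3 → D3 → D3} (hg : IsTerm₂ C g) : g = binop (g 0 1) (g 0 2) := by
  funext x y
  have hshift : g x y = g 0 (y - x) + x := by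
    simpa using hC.isTerm₂_add hg 0 (y - x) x
  have hidem : g 0 0 = 0 := hC.isTerm_const hg 0
  rw [hshift, binop, add_comm]
  rcases eq_zero_or_one_or_two (y - x) with h | h | h <;> simp [h, hidem]

theorem isTerm₂_avg_of_not_isConservative (h : ¬ IsConservative C) : IsTerm₂ C avg := by
  simp only [IsConservative] at h
  push Not at h
  obtain ⟨n, f, hf, x, hx, hfx⟩ := h
  let g (a b : D3) : D3 := f fun i => if x i = 0 then a else b
  have hg : IsTerm₂ C g :=
    (hC.isTerm_iff_mem.2 hf).ite (fun i => x i = 0) (isTerm_proj (0 : Fin 2)) (isTerm_proj 1)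
  have hg01 : g 0 1 = 2 := by
    rw [← hfx]
    refine congrArg f (funext fun i => ?_)
    rcases hx i with h | h <;> simp [h]
  have p₁ : IsTerm₂ C fun x _ => x := isTerm_proj 0
  have p₂ : IsTerm₂ C fun _ y => y := isTerm_proj 1
  have havg_of_22 (h : IsTerm₂ C (binop 2 2)) : IsTerm₂ C avg := by
    have havg : avg = fun x y =>
        binop 2 2 (binop 2 2 y (binop 2 2 x y)) (binop 2 2 (binop 2 2 x y) x) := by decide
    exact havg ▸ h.app (h.app p₂ (h.app p₁ p₂)) (h.app (h.app p₁ p₂) p₁)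
  rw [hC.eq_binop hg, hg01] at hg
  rcases eq_zero_or_one_or_two (g 0 2) with hb | hb | hb
  · rw [hb] at hg
    have h22 : binop 2 2 = fun x y => binop 2 0 x (binop 2 0 y x) := by decide
    exact havg_of_22 (h22 ▸ hg.app p₁ (hg.app p₂ p₁))
  · have havg : avg = binop 2 1 := by decide
    rwa [hb, ← havg] at hg
  · rw [hb] at hg
    exact havg_of_22 hg

end IsSelfDualIdem

theorem IsTerm₂.sub_add (h : IsTerm₂ C avg) : IsTerm₃ C fun x y z => x - y + z := by
  have hsub : ∀ x y z : D3, x - y + z = avg (avg x z) y := by decide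
  simpa only [IsTerm₃, hsub] using
    h.app (h.app (isTerm_proj (0 : Fin 3)) (isTerm_proj 2)) (isTerm_proj 1)

/-! ### Affine clones -/

/-- The clone consists of affine operations and contains the affine average. -/
def IsAffine (C : OpFamily) : Prop :=
  IsTerm₂ C avg ∧ ∀ n, ∀ f ∈ C n, ∀ p q : Fin n → D3, f (p + q) = f p + f q

theorem isTerm_add_hom_sub (h : IsTerm₂ C avg) {F G H : (I → D3) → D3} (hF : IsTerm C F)
    (hG : IsTerm C G) (hH : IsTerm C H) (φ : D3 →+ D3) :
    IsTerm C fun x => F x + φ (G x - H x) := by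
  have hadd {F : (I → D3) → D3} (hF : IsTerm C F) : IsTerm C fun x => F x + (G x - H x) := by
    have hcomm (a b c : D3) : a + (b - c) = a - c + b := by abel
    simpa only [hcomm] using h.sub_add.app hF hH hG
  have hφ (d : D3) : φ d = φ 1 * d := by
    rcases eq_zero_or_one_or_two d with rfl | rfl | rfl
    · rw [map_zero, mul_zero]
    · rw [mul_one]
    · have mul_two (a : D3) : a * 2 = a + a := by decide +revert
      rw [mul_two, ← map_add]
      rfl
  simp only [hφ (_ - _)]
  rcases eq_zero_or_one_or_two (φ 1) with hk | hk | hk <;> rw [hk]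
  · simpa only [zero_mul, add_zero] using hF
  · simpa only [one_mul] using hadd hF
  · have two_mul (a : D3) : 2 * a = a + a := by decide +revert
    simpa only [two_mul, ← add_assoc] using hadd (hadd hF)

theorem IsAffine.subset (hC : IsSelfDualIdem C) (hC' : IsSelfDualIdem C') (h : IsAffine C)
    (h' : IsAffine C') (n : ℕ) : C n ⊆ C' n := by
  intro f hf
  obtain ⟨i₀⟩ := hC.nonempty_of_isTerm (hC.isTerm_iff_mem.2 hf)
  let φ : (Fin n → D3) →+ D3 := AddMonoidHom.mk' f (h.2 n f hf)
  let φ' (i : Fin n) : D3 →+ D3 := φ.comp (AddMonoidHom.single (fun _ => D3) i)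
  have hterm (S : Finset (Fin n)) :
      IsTerm C' fun x : Fin n → D3 => x i₀ + ∑ i ∈ S, φ' i (x i - x i₀) := by
    induction S using Finset.cons_induction with
    | empty => simpa using isTerm_proj i₀
    | cons i S hi ih =>
      simp only [Finset.sum_cons, add_comm (φ' i _), ← add_assoc]
      exact isTerm_add_hom_sub h'.1 ih (isTerm_proj i) (isTerm_proj i₀) (φ' i)
  have hexpand (x : Fin n → D3) : x i₀ + ∑ i, φ' i (x i - x i₀) = f x := by
    have hsum : ∑ i, φ' i (x i - x i₀) = φ (x - fun _ => x i₀) := by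
      rw [← Finset.univ_sum_single (x - fun _ => x i₀), map_sum]
      rfl
    rw [hsum, map_sub]
    change x i₀ + (f x - f fun _ => x i₀) = f x
    rw [hC.const f hf, add_sub_cancel]
  exact hC'.isTerm_iff_mem.1 (by simpa only [hexpand] using hterm Finset.univ)

/-! ### Non-affine clones with the affine average -/

/-- `ψ` gives a term operation `(x, y, z) ↦ x + ψ (y - x, z - x)`. By self-duality, all ternary
term operations are of this form. -/
abbrev IsDiffTerm (C : OpFamily) (ψ : D3 → D3 → D3) : Prop :=
  IsTerm₃ C fun x y z => x + ψ (y - x) (z - x)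

namespace IsDiffTerm

theorem fst : IsDiffTerm C fun u _ => u := by
  simpa [IsDiffTerm, IsTerm₃] using isTerm_proj (1 : Fin 3)

theorem snd : IsDiffTerm C fun _ v => v := by
  simpa [IsDiffTerm, IsTerm₃] using isTerm_proj (2 : Fin 3)

theorem zero : IsDiffTerm C fun _ _ => 0 := by
  simpa [IsDiffTerm, IsTerm₃] using isTerm_proj (0 : Fin 3)

variable {ψ α β : D3 → D3 → D3}

theorem comp (h : IsDiffTerm C ψ) (hα : IsDiffTerm C α) (hβ : IsDiffTerm C β) :
    IsDiffTerm C fun u v => ψ (α u v) (β u v) := by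
  have h' := IsTerm₃.app (g := fun x y z => x + ψ (y - x) (z - x)) h (isTerm_proj 0) hα hβ
  simpa only [add_sub_cancel_left] using h'

variable (hm : IsTerm₂ C avg)
include hm

theorem add (hα : IsDiffTerm C α) (hβ : IsDiffTerm C β) :
    IsDiffTerm C fun u v => α u v + β u v := by
  have hadd (x a b : D3) : x + a - x + (x + b) = x + (a + b) := by abel
  simpa only [hadd] using hm.sub_add.app hα (isTerm_proj 0) hβ

theorem neg (hα : IsDiffTerm C α) : IsDiffTerm C fun u v => -α u v := by
  have hneg (a : D3) : -a = a + a := by decide +revert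
  rw [show (fun u v => -α u v) = fun u v => α u v + α u v from funext₂ fun u v => hneg (α u v)]
  exact hα.add hm hα

theorem const_mul (hα : IsDiffTerm C α) (k : D3) : IsDiffTerm C fun u v => k * α u v := by
  obtain rfl | rfl | rfl : k = 0 ∨ k = 1 ∨ k = -1 := eq_zero_or_one_or_two k
  · simpa only [zero_mul] using zero
  · simpa only [one_mul] using hα
  · have neg_one_mul (a : D3) : -1 * a = -a := by decide +revert
    simpa only [neg_one_mul] using hα.neg hm

theorem of_const_mul {k : D3} (hk : k ≠ 0) (hα : IsDiffTerm C fun u v => k * α u v) :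
    IsDiffTerm C α := by
  have hcancel : ∀ k a : D3, k ≠ 0 → k * (k * a) = a := by decide
  simpa only [hcancel k _ hk] using hα.const_mul hm k

end IsDiffTerm

theorem hasNearUnanimity_of_majority (hC : IsSelfDualIdem C) {g : D3 → D3 → D3 → D3}
    (hg : IsTerm₃ C g) (hmaj : ∀ x y, g x x y = x ∧ g x y x = x ∧ g y x x = x) :
    HasNearUnanimity C 2 := by
  refine ⟨_, hC.isTerm_iff_mem.1 hg, fun x i v hv => ?_⟩
  fin_cases i
  · simpa only [hv 1 (by decide), hv 2 (by decide)] using (hmaj x (v 0)).2.2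
  · simpa only [hv 0 (by decide), hv 2 (by decide)] using (hmaj x (v 1)).2.1
  · simpa only [hv 0 (by decide), hv 1 (by decide)] using (hmaj x (v 2)).1

namespace IsDiffTerm

theorem hasNearUnanimity (hC : IsSelfDualIdem C) (h : IsDiffTerm C fun u v => u * u * v) :
    HasNearUnanimity C 2 :=
  hasNearUnanimity_of_majority (g := fun x y z => x + (y - x) * (y - x) * (z - x)) hC h (by decide)

variable {ψ : D3 → D3 → D3} (hm : IsTerm₂ C avg)
include hm

theorem mul_self_mul_of_mul_self (h : IsDiffTerm C fun u _ => u * u) :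
    IsDiffTerm C fun u v => u * u * v := by
  have hsq {α : D3 → D3 → D3} (hα : IsDiffTerm C α) :
      IsDiffTerm C fun u v => α u v * α u v := h.comp hα snd
  have hpolar : ∀ u v : D3, -((u + v) * (u + v) + -(u * u + v * v)) = u * v := by decide
  have hmul : IsDiffTerm C fun u v => u * v := by
    have h' := (hsq (fst.add hm snd)).add hm (((hsq fst).add hm (hsq snd)).neg hm)
    simpa only [hpolar] using h'.neg hm
  exact hmul.comp h snd

theorem mul_self_of_add_neg_ne_zero {r : D3 → D3} (h : IsDiffTerm C fun u _ => r u)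
    (h0 : r 0 = 0) (hr : r 1 + r (-1) ≠ 0) : IsDiffTerm C fun u _ => u * u := by
  have heven (u : D3) : r u + r (-u) = (r 1 + r (-1)) * (u * u) := by
    obtain rfl | rfl | rfl : u = 0 ∨ u = 1 ∨ u = -1 := eq_zero_or_one_or_two u
    · simp [h0]
    · simp
    · simp [add_comm]
  refine of_const_mul hm hr ?_
  simpa only [← heven] using h.add hm (h.comp (fst.neg hm) snd)

/-- The odd functions of `u` and `v` vanishing on both axes are spanned by `u * v * v` and
`u * u * v`. -/
theorem mul_self_mul_of_odd (h : IsDiffTerm C ψ) (hodd : ∀ u v, ψ (-u) (-v) = -ψ u v)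
    (hu : ∀ u, ψ u 0 = 0) (hv : ∀ v, ψ 0 v = 0) (h11 : ψ 1 1 ≠ 0) :
    IsDiffTerm C fun u v => u * u * v := by
  have hψ' : IsDiffTerm C fun u v => ψ u (-v) := h.comp fst (snd.neg hm)
  have hodd' (v : D3) : ψ (-1) v = -ψ 1 (-v) := by rw [← hodd, neg_neg]
  have hP (u v : D3) : ψ u v + ψ u (-v) = (ψ 1 1 + ψ 1 (-1)) * (u * v * v) := by
    obtain rfl | rfl | rfl : u = 0 ∨ u = 1 ∨ u = -1 := eq_zero_or_one_or_two u <;>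
    obtain rfl | rfl | rfl : v = 0 ∨ v = 1 ∨ v = -1 := eq_zero_or_one_or_two v <;>
    simp [hu, hv, hodd', add_comm]
  have hQ (u v : D3) : ψ u v + -ψ u (-v) = (ψ 1 1 + -ψ 1 (-1)) * (u * u * v) := by
    obtain rfl | rfl | rfl : u = 0 ∨ u = 1 ∨ u = -1 := eq_zero_or_one_or_two u <;>
    obtain rfl | rfl | rfl : v = 0 ∨ v = 1 ∨ v = -1 := eq_zero_or_one_or_two v <;>
    simp [hu, hv, hodd', add_comm]
  have hPQ : ψ 1 1 + ψ 1 (-1) ≠ 0 ∨ ψ 1 1 + -ψ 1 (-1) ≠ 0 := by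
    have : ∀ a b : D3, a ≠ 0 → a + b ≠ 0 ∨ a + -b ≠ 0 := by decide
    exact this _ _ h11
  rcases hPQ with hP0 | hQ0
  · have h' : IsDiffTerm C fun u v => u * v * v :=
      of_const_mul hm hP0 (by simpa only [← hP] using h.add hm hψ')
    have hswap : ∀ u v : D3, v * u * u = u * u * v := by decide
    simpa only [hswap] using h'.comp snd fst
  · exact of_const_mul hm hQ0 (by simpa only [← hQ] using h.add hm (hψ'.neg hm))

theorem hasNearUnanimity_of_not_additive (hC : IsSelfDualIdem C) (h : IsDiffTerm C ψ)
    (h00 : ψ 0 0 = 0) (h11 : ψ 1 1 ≠ ψ 1 0 + ψ 0 1) : HasNearUnanimity C 2 := by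
  by_cases hodd : ∀ u v, ψ (-u) (-v) = -ψ u v
  · let χ (u v : D3) : D3 := ψ u v + -(ψ u 0 + ψ 0 v)
    have hχ : IsDiffTerm C χ := h.add hm (((h.comp fst zero).add hm (h.comp zero snd)).neg hm)
    refine (mul_self_mul_of_odd hm hχ (fun u v => ?_) ?_ ?_ ?_).hasNearUnanimity hC
    · have hu := hodd u 0
      have hv := hodd 0 v
      rw [neg_zero] at hu hv
      simp only [χ, hodd u v, hu, hv, neg_add]
    · simp [χ, h00]
    · simp [χ, h00]
    · simpa only [χ, ← sub_eq_add_neg, sub_ne_zero] using h11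
  · push Not at hodd
    obtain ⟨a, b, hab⟩ := hodd
    have hr : IsDiffTerm C fun u _ => ψ (a * u) (b * u) :=
      h.comp (fst.const_mul hm a) (fst.const_mul hm b)
    refine (mul_self_mul_of_mul_self hm (mul_self_of_add_neg_ne_zero hm hr ?_ ?_)).hasNearUnanimity
      hC
    · simpa using h00
    · simpa [add_comm, eq_neg_iff_add_eq_zero] using hab

end IsDiffTerm

theorem hasNearUnanimity_of_not_isAffine (hC : IsSelfDualIdem C) (hm : IsTerm₂ C avg)
    (h : ¬ IsAffine C) : HasNearUnanimity C 2 := by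
  simp only [IsAffine, hm, true_and] at h
  push Not at h
  obtain ⟨n, f, hf, p, q, hpq⟩ := h
  have hf' := hC.isTerm_iff_mem.2 hf
  have hψ : IsDiffTerm C fun u v => f fun i => p i * u + q i * v := by
    have hlin (i : Fin n) : IsDiffTerm C fun u v => p i * u + q i * v :=
      (IsDiffTerm.fst.const_mul hm _).add hm (IsDiffTerm.snd.const_mul hm _)
    have hshift (c : D3) (x : Fin n → D3) : f (fun i => c + x i) = c + f x := by
      simpa only [add_comm c] using hC.isTerm_add hf' x c
    simpa only [hshift] using hf'.comp hlin
  refine hψ.hasNearUnanimity_of_not_additive hm hC ?_ ?_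
  · simpa using hC.const f hf 0
  · simp only [mul_zero, mul_one, zero_add, add_zero]
    exact hpq

/-! ### Traces on two-element subsets -/

/-- The two-element subset `{c, c + 1}` of `{0,1,2}`, with `c` as the bottom element. -/
def edge (c : D3) (b : Bool) : D3 := if b then c + 1 else c

@[simp] theorem edge_true (c : D3) : edge c true = c + 1 := rfl

@[simp] theorem edge_false (c : D3) : edge c false = c := rfl

/-- `f` acts as the Boolean operation `B` on every two-element subset of `{0,1,2}`. -/
def HasTrace (f : (I → D3) → D3) (B : (I → Bool) → Bool) : Prop :=
  ∀ c s, f (fun i => edge c (s i)) = edge c (B s)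

/-- The action of `f` on `{0,1}`. -/
def trace (f : (I → D3) → D3) (s : I → Bool) : Bool := decide (f (fun i => edge 0 (s i)) = 1)

theorem hasTrace_proj (i : I) : HasTrace (fun x => x i) fun s => s i := fun _ _ => rfl

theorem HasTrace.trace_eq {f : (I → D3) → D3} {B : (I → Bool) → Bool} (hf : HasTrace f B) :
    trace f = B := by
  funext s
  rw [trace, hf]
  generalize B s = b
  decide +revert

theorem HasTrace.comp {f : (I → D3) → D3} {B : (I → Bool) → Bool} {g : I → (J → D3) → D3}
    {B' : I → (J → Bool) → Bool} (hf : HasTrace f B) (hg : ∀ i, HasTrace (g i) (B' i)) :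
    HasTrace (fun x => f fun i => g i x) fun s => B fun i => B' i s := by
  intro c s
  simp only [hg _ c s]
  exact hf c _

theorem IsConservative.apply_edge_ne_two (hC : IsSelfDualIdem C) (hc : IsConservative C)
    {f : (I → D3) → D3} (hf : IsTerm C f) (s : I → Bool) : f (fun i => edge 0 (s i)) ≠ 2 := by
  have hmem := hC.isTerm_iff_mem.1 (hf.minor fun i => if s i then (1 : Fin 2) else 0)
  convert hc 2 _ hmem ![0, 1] (by simp [Fin.forall_fin_two]) using 2
  funext i
  cases s i <;> simp

theorem IsConservative.hasTrace_trace (hC : IsSelfDualIdem C) (hc : IsConservative C)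
    {f : (I → D3) → D3} (hf : IsTerm C f) : HasTrace f (trace f) := by
  intro c s
  have hshift : f (fun i => edge c (s i)) = f (fun i => edge 0 (s i)) + c := by
    rw [← hC.isTerm_add hf]
    refine congrArg f (funext fun i => ?_)
    cases s i <;> simp [add_comm]
  rw [hshift, trace]
  have hedge : ∀ a c : D3, a ≠ 2 → a + c = edge c (decide (a = 1)) := by decide
  exact hedge _ _ (hc.apply_edge_ne_two hC hf s)

theorem trace_const_true (hC : IsSelfDualIdem C) {f : (I → D3) → D3} (hf : IsTerm C f) :
    trace f (fun _ => true) = true :=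
  decide_eq_true (hC.isTerm_const hf 1)

theorem trace_const_false (hC : IsSelfDualIdem C) {f : (I → D3) → D3} (hf : IsTerm C f) :
    trace f (fun _ => false) = false :=
  decide_eq_false (by simp [hC.isTerm_const hf])

theorem eq_edge_of_forall {c : D3} {y : I → D3} (h : ∀ i, y i = c ∨ y i = c + 1) :
    y = fun i => edge c (decide (y i = c + 1)) := by
  have hedge : ∀ c a : D3, a = c ∨ a = c + 1 → a = edge c (decide (a = c + 1)) := by decide
  exact funext fun i => hedge c (y i) (h i)

theorem exists_edge_or_surjective (y : I → D3) :
    (∃ (c : D3) (s : I → Bool), y = fun i => edge c (s i)) ∨ Function.Surjective y := by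
  by_cases h : Function.Surjective y
  · exact Or.inr h
  simp only [Function.Surjective] at h
  push Not at h
  obtain ⟨c, hc⟩ := h
  have havoid : ∀ c a : D3, a ≠ c → a = c + 1 ∨ a = c + 1 + 1 := by decide
  exact Or.inl ⟨c + 1, _, eq_edge_of_forall fun i => havoid c (y i) (hc i)⟩

/-! ### Binary term operations of conservative clones -/

/-- The minimum for the cyclic order `0 < 1 < 2 < 0`. -/
def cycMin (x y : D3) : D3 := if y = x + 1 then x else y

/-- The maximum for the cyclic order `0 < 1 < 2 < 0`. -/
def cycMax (x y : D3) : D3 := if y = x + 1 then y else x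

/-- All binary term operations of `C` are projections. -/
def BinaryTermsAreProj (C : OpFamily) : Prop :=
  ∀ g, IsTerm₂ C g → g = (fun x _ => x) ∨ g = (fun _ y => y)

theorem IsConservative.cycMin_or_cycMax_or_proj (hC : IsSelfDualIdem C) (hc : IsConservative C) :
    IsTerm₂ C cycMin ∨ IsTerm₂ C cycMax ∨ BinaryTermsAreProj C := by
  by_cases hmin : IsTerm₂ C cycMin
  · exact Or.inl hmin
  by_cases hmax : IsTerm₂ C cycMax
  · exact Or.inr (Or.inl hmax)
  refine Or.inr (Or.inr fun g hg => ?_)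
  have hbinop : ∀ a b, binop (edge 0 a) (edge 2 b) = cycMin ∨ binop (edge 0 a) (edge 2 b) = cycMax ∨
      binop (edge 0 a) (edge 2 b) = (fun x _ => x) ∨
      binop (edge 0 a) (edge 2 b) = (fun _ y => y) := by decide
  have h01 := hc.hasTrace_trace hC hg 0 ![false, true]
  have h02 := hc.hasTrace_trace hC hg 2 ![true, false]
  have hgb := hC.eq_binop hg
  rw [show g 0 1 = edge 0 _ from h01, show g 0 2 = edge 2 _ from h02] at hgb
  rcases hgb ▸ hbinop _ _ with rfl | rfl | h
  · exact absurd hg hmin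
  · exact absurd hg hmax
  · exact h

/-! ### Clones whose binary terms are projections -/

/-- A minority operation: the odd value out wins. -/
def IsMinority (g : D3 → D3 → D3 → D3) : Prop := ∀ x y, g x x y = y ∧ g x y x = y ∧ g y x x = y

/-- `g` agrees with a majority operation on two of the three positions of the odd value out and
with a minority operation on the third. -/
def IsPairProj (g : D3 → D3 → D3 → D3) : Prop :=
  (∀ x y, g x x y = x ∧ g x y x = x ∧ g y x x = y) ∨
  (∀ x y, g x x y = x ∧ g x y x = y ∧ g y x x = x) ∨
  (∀ x y, g x x y = y ∧ g x y x = x ∧ g y x x = x)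

theorem BinaryTermsAreProj.isMinority_or_isPairProj (hC : IsSelfDualIdem C)
    (hs : BinaryTermsAreProj C) (hnu : ¬ HasNearUnanimity C 2) {g : D3 → D3 → D3 → D3}
    (hg : IsTerm₃ C g) : IsMinority g ∨ IsPairProj g := by
  have hproj (k : D3 → D3 → D3) (hk : IsTerm₂ C k) : (∀ x y, k x y = x) ∨ ∀ x y, k x y = y := by
    rcases hs k hk with rfl | rfl
    exacts [Or.inl fun _ _ => rfl, Or.inr fun _ _ => rfl]
  have hmaj {h : D3 → D3 → D3 → D3} (hh : IsTerm₃ C h) :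
      ¬ ∀ x y, h x x y = x ∧ h x y x = x ∧ h y x x = x :=
    fun hm => hnu (hasNearUnanimity_of_majority hC hh hm)
  have hp := isTerm_proj (C := C) (I := Fin 3)
  have hq := isTerm_proj (C := C) (I := Fin 2)
  rcases hproj (fun x y => g x x y) (hg.app (hq 0) (hq 0) (hq 1)) with e₁ | e₁ <;>
  rcases hproj (fun x y => g x y x) (hg.app (hq 0) (hq 1) (hq 0)) with e₂ | e₂ <;>
  rcases hproj (fun x y => g y x x) (hg.app (hq 1) (hq 0) (hq 0)) with e₃ | e₃
  · exact absurd (fun x y => ⟨e₁ x y, e₂ x y, e₃ x y⟩) (hmaj hg)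
  · exact Or.inr (Or.inl fun x y => ⟨e₁ x y, e₂ x y, e₃ x y⟩)
  · exact Or.inr (Or.inr (Or.inl fun x y => ⟨e₁ x y, e₂ x y, e₃ x y⟩))
  · refine absurd (fun x y => ?_) (hmaj (h := fun x y z => g x y (g x y z))
      (hg.app (hp 0) (hp 1) hg))
    simp only [e₁, e₂, e₃, and_self]
  · exact Or.inr (Or.inr (Or.inr fun x y => ⟨e₁ x y, e₂ x y, e₃ x y⟩))
  · refine absurd (fun x y => ?_) (hmaj (h := fun x y z => g x (g x y z) z)
      (hg.app (hp 0) hg (hp 2)))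
    simp only [e₁, e₂, e₃, and_self]
  · refine absurd (fun x y => ?_) (hmaj (h := fun x y z => g (g x y z) y z)
      (hg.app hg (hp 1) (hp 2)))
    simp only [e₁, e₂, e₃, and_self]
  · exact Or.inl fun x y => ⟨e₁ x y, e₂ x y, e₃ x y⟩

section Additivity

variable {f : (I → D3) → D3} {s s' : I → Bool}

theorem exists_isTerm₃_trace (hf : IsTerm C f) (hd : ∀ i, s i = true → s' i = false) :
    ∃ t, IsTerm₃ C t ∧ trace f s = decide (t 1 0 0 = 1) ∧ trace f s' = decide (t 0 1 0 = 1) ∧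
      trace f (fun i => s i || s' i) = decide (t 1 1 0 = 1) := by
  refine ⟨fun x y z => f fun i => if s i then x else if s' i then y else z,
    hf.comp (g := fun i v => if s i then v 0 else if s' i then v 1 else v 2) fun i => ?_,
    ?_, ?_, ?_⟩
  · split_ifs
    exacts [isTerm_proj 0, isTerm_proj 1, isTerm_proj 2]
  all_goals
    unfold trace
    congr 3
    funext i
    have hi := hd i
    revert hi
    cases h : s i <;> cases h' : s' i <;> simp [h, h']

theorem trace_or_eq_xor (h : ∀ g, IsTerm₃ C g → IsMinority g ∨ IsPairProj g) (hf : IsTerm C f)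
    (hd : ∀ i, s i = true → s' i = false) :
    trace f (fun i => s i || s' i) = (trace f s ^^ trace f s') := by
  obtain ⟨t, ht, hs, hs', hor⟩ := exists_isTerm₃_trace hf hd
  rw [hs, hs', hor]
  rcases h t ht with h | h | h | h <;> simp [(h 1 0).1, (h 0 1).2.1, (h 0 1).2.2]

theorem not_trace_and_trace (h : ∀ g, IsTerm₃ C g → IsPairProj g) (hf : IsTerm C f)
    (hd : ∀ i, s i = true → s' i = false) : ¬ (trace f s = true ∧ trace f s' = true) := by
  obtain ⟨t, ht, hs, hs', -⟩ := exists_isTerm₃_trace hf hd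
  rw [hs, hs']
  rcases h t ht with h | h | h <;> simp [(h 0 1).2.1, (h 0 1).2.2]

theorem exists_trace_eq_eval [Finite I] (hC : IsSelfDualIdem C)
    (h : ∀ g, IsTerm₃ C g → IsPairProj g) (hf : IsTerm C f) : ∃ i, trace f = fun s => s i := by
  classical
  have := Fintype.ofFinite I
  have hatoms (S : Finset I) : trace f (fun j => decide (j ∈ S)) = true ↔
      ∃ i ∈ S, trace f (fun j => decide (j = i)) = true := by
    induction S using Finset.induction_on with
    | empty => simpa using trace_const_false hC hf
    | insert a S ha ih =>
      have hd (j : I) : decide (j = a) = true → decide (j ∈ S) = false := by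
        simpa using fun hj => hj ▸ ha
      have hadd := trace_or_eq_xor (fun g hg => Or.inr (h g hg)) hf hd
      have hnot := not_trace_and_trace h hf hd
      simp only [← Bool.decide_or, ← Finset.mem_insert] at hadd
      rw [hadd, Finset.exists_mem_insert, ← ih]
      revert hnot
      cases trace f _ <;> cases trace f _ <;> simp
  obtain ⟨i, -, hi⟩ := (hatoms Finset.univ).1 (by simpa using trace_const_true hC hf)
  have huniq (i' : I) (hi' : trace f (fun j => decide (j = i')) = true) : i' = i := by
    by_contra hne
    exact not_trace_and_trace h hf (by simpa using hne) ⟨hi', hi⟩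
  refine ⟨i, funext fun s => Bool.eq_iff_iff.2 ?_⟩
  have hs := hatoms {j | s j = true}
  simp only [Finset.mem_filter_univ, Bool.decide_eq_true] at hs
  rw [hs]
  exact ⟨fun ⟨i', hsi', hi'⟩ => huniq i' hi' ▸ hsi', fun hsi => ⟨i, hsi, hi⟩⟩

end Additivity

theorem MinorLE.of_isPairProj (hC : IsSelfDualIdem C) (hC' : IsSelfDualIdem C')
    (h : ∀ g, IsTerm₃ C g → IsPairProj g) : MinorLE C C' := by
  refine ⟨fun n f a => if trace f (fun i => decide (a i = 0)) then 0 else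
    if trace f (fun i => decide (a i = 1)) then 1 else 2, fun n f hf => ?_, fun _ _ _ _ _ => rfl⟩
  obtain ⟨i, hi⟩ := exists_trace_eq_eval hC h (hC.isTerm_iff_mem.2 hf)
  convert hC'.clone.proj_mem n i using 1
  funext a
  have hcases : ∀ c : D3, (if decide (c = 0) then 0 else if decide (c = 1) then 1 else 2) = c := by
    decide
  simpa only [hi] using hcases (a i)

/-! ### Clones with a minority operation -/

/-- The second argument if the three arguments are distinct, and the first argument otherwise. -/
def sndIfDistinct (x y z : D3) : D3 := if x ≠ y ∧ x ≠ z ∧ y ≠ z then y else x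

theorem sndIfDistinct_of_ne {x y z : D3} (hxy : x ≠ y) (hxz : x ≠ z) (hyz : y ≠ z) :
    sndIfDistinct x y z = y := if_pos ⟨hxy, hxz, hyz⟩

@[simp] theorem sndIfDistinct_fst_fst (x z : D3) : sndIfDistinct x x z = x := by
  simp [sndIfDistinct]

@[simp] theorem sndIfDistinct_fst_thd (x y : D3) : sndIfDistinct x y x = x := by
  simp [sndIfDistinct]

@[simp] theorem sndIfDistinct_snd_snd (x y : D3) : sndIfDistinct x y y = x := by
  simp [sndIfDistinct]

/-- The self-dual minority operation with values `a` at `(0, 1, 2)` and `b` at `(0, 2, 1)`. -/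
def minorityOp (a b x y z : D3) : D3 :=
  if x = y then z else if x = z then y else if y = z then x else if y = x + 1 then x + a else x + b

theorem IsMinority.eq_minorityOp (hC : IsSelfDualIdem C) {p : D3 → D3 → D3 → D3}
    (hp : IsTerm₃ C p) (hm : IsMinority p) : p = minorityOp (p 0 1 2) (p 0 2 1) := by
  funext x y z
  have h012 : p x (x + 1) (x + 2) = x + p 0 1 2 := by
    simpa [add_comm] using hC.isTerm₃_add hp 0 1 2 x
  have h021 : p x (x + 2) (x + 1) = x + p 0 2 1 := by
    simpa [add_comm] using hC.isTerm₃_add hp 0 2 1 x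
  have hdistinct : ∀ x y z : D3, x = y ∨ x = z ∨ y = z ∨ y = x + 1 ∧ z = x + 2 ∨
      y = x + 2 ∧ z = x + 1 := by decide
  rcases hdistinct x y z with rfl | rfl | rfl | ⟨rfl, rfl⟩ | ⟨rfl, rfl⟩
  · simp [minorityOp, (hm _ _).1]
  · simp only [minorityOp, (hm _ _).2.1]
    split_ifs with h <;> simp [h]
  · simp only [minorityOp, (hm _ _).2.2]
    split_ifs with h <;> simp [h]
  · rw [h012]
    simp [minorityOp]
  · rw [h021]
    simp [minorityOp]

theorem IsMinority.isTerm₃_sndIfDistinct (hC : IsSelfDualIdem C) {p : D3 → D3 → D3 → D3}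
    (hp : IsTerm₃ C p) (hm : IsMinority p) : IsTerm₃ C sndIfDistinct := by
  have hsnd : ∀ a b, sndIfDistinct = fun x y z => minorityOp a b (minorityOp a b x y z)
      (minorityOp a b x y (minorityOp a b z x y)) y := by decide
  rw [hsnd (p 0 1 2) (p 0 2 1), ← hm.eq_minorityOp hC hp]
  have hvar := isTerm_proj (C := C) (I := Fin 3)
  exact hp.app hp (hp.app (hvar 0) (hvar 1) (hp.app (hvar 2) (hvar 0) (hvar 1))) (hvar 1)

/-- There are term operations `r` and `u` that take the values `z j` and `z k`, distinct from each
other and from `z i`, at the tuples `z` satisfying `P`, and the value `z i` at all other tuples. -/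
def Separates (C : OpFamily) (i j k : I) (P : (I → D3) → Prop) : Prop :=
  ∃ r u : (I → D3) → D3, IsTerm C r ∧ IsTerm C u ∧ ∀ z,
    (P z → z i ≠ z j ∧ z i ≠ z k ∧ z j ≠ z k ∧ r z = z j ∧ u z = z k) ∧
    (¬ P z → r z = z i ∧ u z = z i)

section Separation

variable (hq : IsTerm₃ C sndIfDistinct) (i j k : I)
include hq

theorem separates_distinct :
    Separates C i j k fun z => z i ≠ z j ∧ z i ≠ z k ∧ z j ≠ z k := by
  have hp := isTerm_proj (C := C) (I := I)
  refine ⟨_, _, hq.app (hp i) (hp j) (hp k), hq.app (hp i) (hp k) (hp j), fun z => ?_⟩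
  have hval : ∀ x y z : D3, (x ≠ y ∧ x ≠ z ∧ y ≠ z → x ≠ y ∧ x ≠ z ∧ y ≠ z ∧
      sndIfDistinct x y z = y ∧ sndIfDistinct x z y = z) ∧ (¬ (x ≠ y ∧ x ≠ z ∧ y ≠ z) →
      sndIfDistinct x y z = x ∧ sndIfDistinct x z y = x) := by decide
  exact hval (z i) (z j) (z k)

variable {i j k}

theorem Separates.and_eq {P : (I → D3) → Prop} (h : Separates C i j k P) (l : I) {m : I}
    (hm : m = i ∨ m = j ∨ m = k) : Separates C i j k fun z => P z ∧ z l = z m := by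
  obtain ⟨r, u, hr, hu, hru⟩ := h
  have hp := isTerm_proj (C := C) (I := I)
  let q := sndIfDistinct
  have hi : ∀ x y z w : D3, x ≠ y → x ≠ z → y ≠ z →
      (w = x → q x (q w y z) (q w z y) = y ∧ q x (q w z y) (q w y z) = z) ∧
      (w ≠ x → q x (q w y z) (q w z y) = x ∧ q x (q w z y) (q w y z) = x) := by decide
  have hj : ∀ x y z w : D3, x ≠ y → x ≠ z → y ≠ z →
      (w = y → q x w z = y ∧ q x z w = z) ∧ (w ≠ y → q x w z = x ∧ q x z w = x) := by decide
  rcases hm with rfl | rfl | rfl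
  · refine ⟨_, _, hq.app (hp m) (hq.app (hp l) hr hu) (hq.app (hp l) hu hr),
      hq.app (hp m) (hq.app (hp l) hu hr) (hq.app (hp l) hr hu), fun z => ?_⟩
    by_cases hz : P z
    · obtain ⟨hij, hik, hjk, hrz, huz⟩ := (hru z).1 hz
      simpa [hz, hij, hik, hjk, hrz, huz] using hi _ _ _ (z l) hij hik hjk
    · simp [hz, (hru z).2 hz]
  · refine ⟨_, _, hq.app (hp i) (hp l) hu, hq.app (hp i) hu (hp l), fun z => ?_⟩
    by_cases hz : P z
    · obtain ⟨hij, hik, hjk, hrz, huz⟩ := (hru z).1 hz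
      simpa [hz, hij, hik, hjk, hrz, huz] using hj _ _ _ (z l) hij hik hjk
    · simp [hz, (hru z).2 hz]
  · refine ⟨_, _, hq.app (hp i) hr (hp l), hq.app (hp i) (hp l) hr, fun z => ?_⟩
    by_cases hz : P z
    · obtain ⟨hij, hik, hjk, hrz, huz⟩ := (hru z).1 hz
      simpa [hz, hij, hik, hjk, hrz, huz, and_comm] using hj _ _ _ (z l) hik hij hjk.symm
    · simp [hz, (hru z).2 hz]

theorem separates_forall_eq {ρ : I → I} (hρ : ∀ l, ρ l = i ∨ ρ l = j ∨ ρ l = k) (T : Finset I) :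
    Separates C i j k
      fun z => (z i ≠ z j ∧ z i ≠ z k ∧ z j ≠ z k) ∧ ∀ l ∈ T, z l = z (ρ l) := by
  classical
  induction T using Finset.induction_on with
  | empty => simpa using separates_distinct hq i j k
  | insert l T _ ih =>
    simp only [Finset.forall_mem_insert]
    simpa only [and_assoc, and_comm (a := ∀ l ∈ T, _)] using ih.and_eq hq l (hρ l)

theorem exists_isTerm_separating_orbit [Finite I] {a : I → D3} (hij : a i ≠ a j)
    (hik : a i ≠ a k) (hjk : a j ≠ a k) :
    ∃ h : (I → D3) → D3, IsTerm C h ∧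
      (∀ σ : Equiv.Perm D3, h (fun l => σ (a l)) = σ (a j)) ∧
      ∀ z, (∀ σ : Equiv.Perm D3, z ≠ fun l => σ (a l)) → h z = z i := by
  have := Fintype.ofFinite I
  have hcases : ∀ x y z w : D3, x ≠ y → x ≠ z → y ≠ z → w = x ∨ w = y ∨ w = z := by decide
  have hsection (c : D3) : ∃ t, (t = i ∨ t = j ∨ t = k) ∧ a t = c := by
    rcases hcases _ _ _ c hij hik hjk with rfl | rfl | rfl <;> simp
  choose t ht hat using hsection
  obtain ⟨h, _, hh, _, hval⟩ := separates_forall_eq hq (fun l => ht (a l)) Finset.univ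
  refine ⟨h, hh, fun σ => ?_, fun z hz => ?_⟩
  · exact ((hval _).1 (by simp [hij, hik, hjk, hat])).2.2.2.1
  · refine ((hval z).2 fun ⟨⟨zij, zik, zjk⟩, hzt⟩ => ?_).1
    have hinj : Function.Injective fun c => z (t c) := by
      intro c d hcd
      rw [← hat c, ← hat d]
      refine congrArg a ?_
      revert hcd
      rcases ht c with hc | hc | hc <;> rcases ht d with hd | hd | hd <;>
        simp [hc, hd, zij, zik, zjk, zij.symm, zik.symm, zjk.symm]
    exact hz (Equiv.ofBijective _ (Finite.injective_iff_bijective.1 hinj))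
      (funext fun l => by simpa using hzt l (Finset.mem_univ l))

end Separation

/-! ### Operations commuting with all permutations -/

theorem perm_eq_add_or_neg_add :
    ∀ σ : Equiv.Perm D3, ∃ c, (∀ x, σ x = x + c) ∨ ∀ x, σ x = -x + c := by
  decide

/-- Commutes with all permutations of `{0,1,2}`, and has the same trace as `f` if the trace of `f`
commutes with the complement. -/
def symmetrize (f : (I → D3) → D3) (x : I → D3) : D3 := f (fun i => -x i) - f x

theorem symmetrize_perm (hC : IsSelfDualIdem C) {f : (I → D3) → D3} (hf : IsTerm C f)
    (σ : Equiv.Perm D3) (x : I → D3) : symmetrize f (fun i => σ (x i)) = σ (symmetrize f x) := by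
  obtain ⟨c, hσ | hσ⟩ := perm_eq_add_or_neg_add σ
  · have hshift : ∀ a b c : D3, a + -c - (b + c) = a - b + c := by decide
    simp only [hσ, symmetrize, neg_add, hC.isTerm_add hf x, hC.isTerm_add hf fun i => -x i, hshift]
  · have hshift : ∀ a b c : D3, a + -c - (b + c) = -(b - a) + c := by decide
    simp only [hσ, symmetrize, neg_add, neg_neg, hC.isTerm_add hf x,
      hC.isTerm_add hf fun i => -x i, hshift]

theorem HasTrace.symmetrize {f : (I → D3) → D3} {B : (I → Bool) → Bool} (hf : HasTrace f B)
    (hB : ∀ s, B (fun i => !s i) = !B s) : HasTrace (symmetrize f) B := by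
  intro c s
  have hneg : ∀ c b, -edge c b = edge (-c - 1) (!b) := by decide
  have hdiff : ∀ c b, edge (-c - 1) (!b) - edge c b = edge c b := by decide
  simp only [SelfDualClone.symmetrize, hneg, hf _ _, hB, hdiff]

/-- `g` acts as the ternary Boolean operation `B` on every two-element subset of `{0,1,2}`. -/
def HasTrace₃ (g : D3 → D3 → D3 → D3) (B : Bool → Bool → Bool → Bool) : Prop :=
  ∀ c x y z, g (edge c x) (edge c y) (edge c z) = edge c (B x y z)

theorem HasTrace₃.app {g : D3 → D3 → D3 → D3} {B : Bool → Bool → Bool → Bool}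
    (hg : HasTrace₃ g B) {f₀ f₁ f₂ : (I → D3) → D3} {B₀ B₁ B₂ : (I → Bool) → Bool}
    (h₀ : HasTrace f₀ B₀) (h₁ : HasTrace f₁ B₁) (h₂ : HasTrace f₂ B₂) :
    HasTrace (fun x => g (f₀ x) (f₁ x) (f₂ x)) fun s => B (B₀ s) (B₁ s) (B₂ s) := by
  intro c s
  simp only [h₀ c s, h₁ c s, h₂ c s, hg c]

theorem IsMinority.hasTrace₃ {p : D3 → D3 → D3 → D3} (hm : IsMinority p) :
    HasTrace₃ p fun x y z => x ^^ y ^^ z := by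
  intro c x y z
  cases x <;> cases y <;> cases z <;> simp [(hm _ _).1, (hm _ _).2.1, (hm _ _).2.2]

/-! ### Additive traces -/

theorem trace_xor {f : (I → D3) → D3} (h : ∀ g, IsTerm₃ C g → IsMinority g ∨ IsPairProj g)
    (hf : IsTerm C f) (s s' : I → Bool) :
    trace f (fun i => s i ^^ s' i) = (trace f s ^^ trace f s') := by
  have hsplit (s s' : I → Bool) : trace f s =
      (trace f (fun i => s i && s' i) ^^ trace f (fun i => s i && !s' i)) := by
    rw [← trace_or_eq_xor h hf (by simp +contextual)]
    exact congrArg _ (funext fun i => by cases s i <;> cases s' i <;> rfl)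
  have hxor : trace f (fun i => s i ^^ s' i) =
      (trace f (fun i => s i && !s' i) ^^ trace f (fun i => s' i && !s i)) := by
    rw [← trace_or_eq_xor h hf (by simp +contextual)]
    exact congrArg _ (funext fun i => by cases s i <;> cases s' i <;> rfl)
  rw [hxor, hsplit s s', hsplit s' s]
  simp only [Bool.and_comm (s' _) (s _)]
  cases trace f _ <;> cases trace f _ <;> cases trace f _ <;> rfl

theorem exists_isTerm_hasTrace_of_xor [Finite I] {p : D3 → D3 → D3 → D3} (hp : IsTerm₃ C p)
    (hm : IsMinority p) {B : (I → Bool) → Bool} (hB1 : B (fun _ => true) = true)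
    (hBxor : ∀ s s', B (fun i => s i ^^ s' i) = (B s ^^ B s')) :
    ∃ g, IsTerm C g ∧ HasTrace g B := by
  classical
  have := Fintype.ofFinite I
  have hB0 : B (fun _ => false) = false := by simpa using hBxor (fun _ => false) fun _ => false
  obtain ⟨i₀⟩ : Nonempty I := by
    by_contra hI
    rw [not_nonempty_iff] at hI
    rw [Subsingleton.elim (fun _ : I => true) fun _ => false, hB0] at hB1
    exact Bool.false_ne_true hB1
  have hpartial (S : Finset I) : ∃ g, IsTerm C g ∧
      HasTrace g fun s => s i₀ ^^ B (fun i => decide (i ∈ S) && (s i ^^ s i₀)) := by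
    induction S using Finset.induction_on with
    | empty => exact ⟨_, isTerm_proj i₀, by simpa [hB0] using hasTrace_proj i₀⟩
    | insert a S ha ih =>
      obtain ⟨g, hg, hgB⟩ := ih
      have hBatom (b : Bool) :
          B (fun i => decide (i = a) && b) = (B (fun i => decide (i = a)) && b) := by
        cases b <;> simp [hB0]
      have hinsert (s : I → Bool) : B (fun i => decide (i ∈ insert a S) && (s i ^^ s i₀)) =
          (B (fun i => decide (i ∈ S) && (s i ^^ s i₀)) ^^
            (B (fun i => decide (i = a)) && (s a ^^ s i₀))) := by
        rw [← hBatom, ← hBxor]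
        refine congrArg B (funext fun i => ?_)
        by_cases hi : i = a
        · simp [hi, ha]
        · simp [hi]
      simp only [hinsert]
      cases B fun i => decide (i = a)
      · exact ⟨g, hg, by simpa using hgB⟩
      · refine ⟨_, hp.app hg (isTerm_proj a) (isTerm_proj i₀), ?_⟩
        simpa [Bool.xor_assoc] using
          hm.hasTrace₃.app hgB (hasTrace_proj a) (hasTrace_proj i₀)
  obtain ⟨g, hg, hgB⟩ := hpartial Finset.univ
  refine ⟨g, hg, ?_⟩
  convert hgB using 2 with s
  cases s i₀
  · simp
  · simpa [hB1] using (hBxor s fun _ => true).symm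

/-! ### Clones with a minority operation are minor equivalent -/

theorem exists_forall_of_improve {α β : Type*} [Finite α] {Q : β → Prop} {R : α → β → Prop}
    (h₀ : ∃ b, Q b) (h : ∀ a b, Q b → ∃ b', Q b' ∧ R a b' ∧ ∀ a', R a' b → R a' b') :
    ∃ b, Q b ∧ ∀ a, R a b := by
  classical
  have := Fintype.ofFinite α
  suffices ∀ S : Finset α, ∃ b, Q b ∧ ∀ a ∈ S, R a b by simpa using this Finset.univ
  intro S
  induction S using Finset.induction_on with
  | empty => simpa using h₀
  | insert a S _ ih =>
    obtain ⟨b, hQ, hR⟩ := ih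
    obtain ⟨b', hQ', ha, himp⟩ := h a b hQ
    exact ⟨b', hQ', Finset.forall_mem_insert .. |>.2 ⟨ha, fun a' ha' => himp a' (hR a' ha')⟩⟩

theorem exists_isTerm_improve_at [Finite I] (hq : IsTerm₃ C sndIfDistinct)
    {F g : (I → D3) → D3} {B : (I → Bool) → Bool} (hF : HasTrace F B)
    (hFperm : ∀ (σ : Equiv.Perm D3) x, F (fun i => σ (x i)) = σ (F x)) (a : I → D3)
    (hg : IsTerm C g ∧ HasTrace g B) :
    ∃ g', (IsTerm C g' ∧ HasTrace g' B) ∧ g' a = F a ∧ ∀ x, g x = F x → g' x = F x := by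
  by_cases hga : g a = F a
  · exact ⟨g, hg, hga, fun _ => id⟩
  obtain ⟨c, s, rfl⟩ | hsurj := exists_edge_or_surjective a
  · exact absurd ((hg.2 c s).trans (hF c s).symm) hga
  have hthird : ∀ x y : D3, ∃ d, d ≠ x ∧ d ≠ y := by decide
  obtain ⟨d, hdF, hdg⟩ := hthird (F a) (g a)
  obtain ⟨i, hi⟩ := hsurj (F a)
  obtain ⟨j, rfl⟩ := hsurj d
  obtain ⟨k, hk⟩ := hsurj (g a)
  rw [← hi] at hdF
  rw [← hk] at hdg
  obtain ⟨t, ht, htorbit, htout⟩ := exists_isTerm_separating_orbit hq hdF.symm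
    (by rwa [hi, hk, ne_comm]) hdg
  refine ⟨_, ⟨hq.app hg.1 (isTerm_proj i) ht, fun c s => ?_⟩, ?_, fun x hx => ?_⟩
  · have hedge : ∀ c b, edge c b ≠ c + 2 := by decide
    have hnot (σ : Equiv.Perm D3) : (fun i => edge c (s i)) ≠ fun l => σ (a l) := by
      intro h
      obtain ⟨l, hl⟩ := hsurj (σ.symm (c + 2))
      exact hedge c (s l) (by simpa [hl] using congrFun h l)
    simpa [htout _ hnot] using hg.2 c s
  · have hta : t a = a j := htorbit (Equiv.refl D3)
    rw [hta, sndIfDistinct_of_ne (by rwa [hi]) (hk ▸ hdg.symm) hdF.symm, hi]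
  · by_cases hσ : ∃ σ : Equiv.Perm D3, x = fun l => σ (a l)
    · obtain ⟨σ, rfl⟩ := hσ
      rw [hx, hFperm, ← hi, sndIfDistinct_fst_fst]
    · push Not at hσ
      rw [htout x hσ, sndIfDistinct_snd_snd, hx]

theorem MinorLE.of_isMinority (hC : IsSelfDualIdem C) (hC' : IsSelfDualIdem C')
    (hc : IsConservative C) (h : ∀ g, IsTerm₃ C g → IsMinority g ∨ IsPairProj g)
    {p : D3 → D3 → D3 → D3} (hp : IsTerm₃ C' p) (hm : IsMinority p) : MinorLE C C' := by
  refine ⟨fun _ => symmetrize, fun n f hf => ?_, fun _ _ _ _ _ => rfl⟩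
  replace hf := hC.isTerm_iff_mem.2 hf
  have hxor := trace_xor h hf
  have hcompl (s : Fin n → Bool) : trace f (fun i => !s i) = !trace f s := by
    simpa [trace_const_true hC hf] using hxor (fun _ => true) s
  have hF := (hc.hasTrace_trace hC hf).symmetrize hcompl
  obtain ⟨g, ⟨hg, -⟩, hgF⟩ := exists_forall_of_improve (R := fun a g => g a = symmetrize f a)
    (exists_isTerm_hasTrace_of_xor hp hm (trace_const_true hC hf) hxor)
    fun a g => exists_isTerm_improve_at (hm.isTerm₃_sndIfDistinct hC' hp) hF
      (symmetrize_perm hC hf) a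
  obtain rfl : g = symmetrize f := funext hgF
  exact hC'.isTerm_iff_mem.1 hg

/-! ### Interpolation in sets closed under the cyclic minimum -/

section Interpolation

variable {X : Type*}

@[simp] theorem cycMin_self (x : D3) : cycMin x x = x := by decide +revert

@[simp] theorem cycMin_add_one (x : D3) : cycMin x (x + 1) = x := by decide +revert

@[simp] theorem cycMin_add_one_left (x : D3) : cycMin (x + 1) x = x := by decide +revert

theorem eq_or_eq_add_one_or_eq_add_one_add_one (x y : D3) :
    x = y ∨ x = y + 1 ∨ x = y + 1 + 1 := by
  decide +revert

theorem add_one_add_one_add_one (x : D3) : x + 1 + 1 + 1 = x := by decide +revert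

theorem forall_of_add_one_imp {P : D3 → Prop} (hP : ∀ x, P (x + 1) → P x) {y : D3} (hy : P y)
    (x : D3) : P x := by
  rcases eq_or_eq_add_one_or_eq_add_one_add_one y x with rfl | rfl | rfl
  exacts [hy, hP _ hy, hP _ (hP _ hy)]

theorem exists_row_full {W : D3 → D3 → Prop}
    (hstep : ∀ x y, W x (y + 1) → W (x + 1) y → W x y) (hcol : ∀ y, ∃ x, W x y) {x y : D3}
    (hy : W x y) (hy' : W x (y + 1)) : ∃ x, ∀ y, W x y := by
  have hfull {x : D3} (h : W x y) (h' : W x (y + 1)) (h'' : W x (y + 1 + 1)) : ∀ z, W x z := by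
    intro z
    rcases eq_or_eq_add_one_or_eq_add_one_add_one z y with rfl | rfl | rfl <;> assumption
  obtain ⟨x', hx'⟩ := hcol (y + 1 + 1)
  rcases eq_or_eq_add_one_or_eq_add_one_add_one x' x with rfl | rfl | rfl
  · exact ⟨x', hfull hy hy' hx'⟩
  · exact ⟨x, hfull hy hy' (hstep x _ (by rwa [add_one_add_one_add_one]) hx')⟩
  · have hlow' : W (x + 1 + 1) (y + 1) := hstep _ _ hx' (by rwa [add_one_add_one_add_one])
    have hlow : W (x + 1 + 1) y := hstep _ _ hlow' (by rwa [add_one_add_one_add_one])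
    exact ⟨_, hfull hlow hlow' hx'⟩

theorem forall_or_forall_iff_eq_add {W : D3 → D3 → Prop}
    (hcl : ∀ x y x' y', W x y → W x' y' → W (cycMin x x') (cycMin y y'))
    (hrow : ∀ x, ∃ y, W x y) (hcol : ∀ y, ∃ x, W x y) :
    (∀ x y, W x y) ∨ ∃ i, ∀ x y, W x y ↔ y = x + i := by
  have hstep (x y : D3) (h : W x (y + 1)) (h' : W (x + 1) y) : W x y := by
    simpa using hcl _ _ _ _ h h'
  choose h hWh using hrow
  by_cases hfull : ∃ x, ∀ y, W x y
  · obtain ⟨x₀, hx₀⟩ := hfull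
    exact Or.inl (forall_of_add_one_imp
      (fun x hx => forall_of_add_one_imp (fun y hy => hstep x y hy (hx y)) (hWh x)) hx₀)
  have hnext (x y : D3) (hy : W x y) (hy' : W x (y + 1)) : False :=
    hfull (exists_row_full hstep hcol hy hy')
  have hiff (x y : D3) : W x y ↔ y = h x := by
    refine ⟨fun hy => ?_, fun hy => hy ▸ hWh x⟩
    rcases eq_or_eq_add_one_or_eq_add_one_add_one y (h x) with e | rfl | rfl
    · exact e
    · exact (hnext _ _ (hWh x) hy).elim
    · exact (hnext _ _ hy (by rw [add_one_add_one_add_one]; exact hWh x)).elim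
  have hinj : Function.Injective h := Finite.injective_iff_surjective.2 fun y =>
    (hcol y).imp fun x hx => ((hiff x y).1 hx).symm
  have hsucc (x : D3) : h (x + 1) = h x + 1 := by
    rcases eq_or_eq_add_one_or_eq_add_one_add_one (h (x + 1)) (h x) with e | e | e
    · exact absurd (hinj e) (by simp)
    · exact e
    · refine (hnext x (h (x + 1)) (hstep _ _ ?_ (hWh _)) ?_).elim <;>
        rw [e, add_one_add_one_add_one] <;> exact hWh x
  refine Or.inr ⟨h 0, fun x y => (hiff x y).trans (Eq.congr_right ?_)⟩
  refine forall_of_add_one_imp (P := fun x => h x = x + h 0) (fun x hx => ?_) (zero_add _).symm x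
  rwa [hsucc, add_right_comm, add_left_inj] at hx

theorem forall_of_section_extendable {T : D3 → D3 → D3 → Prop}
    (hcl : ∀ x y z x' y' z', T x y z → T x' y' z' → T (cycMin x x') (cycMin y y') (cycMin z z'))
    (h₂ : ∀ x y, ∃ z, T x y z) (h₁ : ∀ x z, ∃ y, T x y z) (h₀ : ∀ y z, ∃ x, T x y z) :
    ∀ x y z, T x y z := by
  have hsec (s : D3) : (∀ y z, T s y z) ∨ ∃ i, ∀ y z, T s y z ↔ z = y + i :=
    forall_or_forall_iff_eq_add
      (fun _ _ _ _ h h' => by simpa only [cycMin_self] using hcl _ _ _ _ _ _ h h') (h₂ s) (h₁ s)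
  have hpred (s : D3) (hs : ∀ y z, T (s + 1) y z) : ∀ y z, T s y z := by
    rcases hsec s with h | ⟨i, hi⟩
    · exact h
    · have hlow := hcl _ _ _ _ _ _ ((hi 1 (1 + i)).2 rfl) (hs 0 (1 + i))
      rw [cycMin_add_one, cycMin_self, hi] at hlow
      exact absurd (add_right_cancel hlow) (by decide)
  by_contra hT
  have hsec' (s : D3) : ∃ i, ∀ y z, T s y z ↔ z = y + i :=
    (hsec s).resolve_left fun h => hT (forall_of_add_one_imp hpred h)
  choose i hi using hsec'
  obtain ⟨s, hs⟩ : ∃ s, i s ≠ i (s + 1) := by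
    by_contra! hconst
    obtain ⟨s, hs⟩ := h₀ 0 (i 0 + 1)
    have hi0 : i s = i 0 :=
      forall_of_add_one_imp (P := fun s => i s = i 0) (fun s h => (hconst s).trans h) rfl s
    simp [hi, hi0] at hs
  have hlow := hcl _ _ _ _ _ _ ((hi s 1 _).2 rfl) ((hi (s + 1) 0 _).2 rfl)
  rw [cycMin_add_one, hi] at hlow
  have hne : ∀ t u : D3, t ≠ u → cycMin (1 + t) (0 + u) ≠ cycMin 1 0 + t := by decide
  exact hne _ _ hs hlow

theorem exists_eqOn_of_exists_eqOn_erase {R : Set (X → D3)}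
    (hcl : ∀ r ∈ R, ∀ r' ∈ R, (fun x => cycMin (r x) (r' x)) ∈ R) {Y : Finset X}
    (hY : 2 < Y.card) (hR : ∀ t ∈ Y, ∀ g : X → D3, ∃ r ∈ R, ∀ x ∈ Y, x ≠ t → r x = g x)
    (g : X → D3) : ∃ r ∈ R, ∀ x ∈ Y, r x = g x := by
  classical
  obtain ⟨p, q, s, hp, hq, hs, hpq, hps, hqs⟩ := Finset.two_lt_card_iff.1 hY
  let T (a b c : D3) : Prop := ∃ r ∈ R, (∀ x ∈ Y, x ≠ p → x ≠ q → x ≠ s → r x = g x) ∧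
    r p = a ∧ r q = b ∧ r s = c
  have hT : T (g p) (g q) (g s) := by
    refine forall_of_section_extendable (T := T) ?_ (fun a b => ?_) (fun a c => ?_)
      (fun b c => ?_) _ _ _
    · rintro _ _ _ _ _ _ ⟨r, hr, hrY, rfl, rfl, rfl⟩ ⟨r', hr', hrY', rfl, rfl, rfl⟩
      exact ⟨_, hcl r hr r' hr', fun x hx hxp hxq hxs => by
        simp only [hrY x hx hxp hxq hxs, hrY' x hx hxp hxq hxs, cycMin_self], rfl, rfl, rfl⟩
    · obtain ⟨r, hr, hrY⟩ := hR s hs (Function.update (Function.update g p a) q b)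
      exact ⟨r s, r, hr, by simp +contextual [hrY], by simp [*], by simp [*], rfl⟩
    · obtain ⟨r, hr, hrY⟩ := hR q hq (Function.update (Function.update g p a) s c)
      exact ⟨r q, r, hr, by simp +contextual [hrY], by simp [*], rfl, by simp [*, hqs.symm]⟩
    · obtain ⟨r, hr, hrY⟩ := hR p hp (Function.update (Function.update g q b) s c)
      exact ⟨r p, r, hr, by simp +contextual [hrY], rfl, by simp [*, hpq.symm],
        by simp [*, hps.symm]⟩
  obtain ⟨r, hr, hrY, hrp, hrq, hrs⟩ := hT
  refine ⟨r, hr, fun x hx => ?_⟩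
  by_cases hxp : x = p
  · rw [hxp, hrp]
  by_cases hxq : x = q
  · rw [hxq, hrq]
  by_cases hxs : x = s
  · rw [hxs, hrs]
  exact hrY x hx hxp hxq hxs

theorem exists_eqOn_of_pair {R : Set (X → D3)} (hne : R.Nonempty)
    (hcl : ∀ r ∈ R, ∀ r' ∈ R, (fun x => cycMin (r x) (r' x)) ∈ R)
    (hpair : ∀ x y, ∀ g : X → D3, ∃ r ∈ R, r x = g x ∧ r y = g y)
    (Y : Finset X) (g : X → D3) : ∃ r ∈ R, ∀ x ∈ Y, r x = g x := by
  classical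
  induction Y using Finset.strongInduction generalizing g with
  | H Y ih =>
    obtain h | h | h | h : Y.card = 0 ∨ Y.card = 1 ∨ Y.card = 2 ∨ 2 < Y.card := by omega
    · obtain rfl := Finset.card_eq_zero.1 h
      exact hne.imp fun r hr => ⟨hr, by simp⟩
    · obtain ⟨x, rfl⟩ := Finset.card_eq_one.1 h
      simpa using hpair x x g
    · obtain ⟨x, y, -, rfl⟩ := Finset.card_eq_two.1 h
      simpa using hpair x y g
    · refine exists_eqOn_of_exists_eqOn_erase hcl h (fun t ht g' => ?_) g
      obtain ⟨r, hr, hr'⟩ := ih (Y.erase t) (Finset.erase_ssubset ht) g'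
      exact ⟨r, hr, fun x hx hxt => hr' x (Finset.mem_erase.2 ⟨hxt, hx⟩)⟩

end Interpolation

/-! ### Meets -/

@[simp] theorem cycMin_edge (c : D3) (b b' : Bool) :
    cycMin (edge c b) (edge c b') = edge c (b && b') := by
  decide +revert

/-- `f` is the meet of the variables in `S` whenever their values lie in a two-element subset
`{c, c + 1}`; the other variables are arbitrary. -/
def IsMeetOn (S : Set I) (f : (I → D3) → D3) : Prop :=
  ∀ y c, (∀ i ∈ S, y i = c ∨ y i = c + 1) →
    (f y = c ∧ ∃ i ∈ S, y i = c) ∨ (f y = c + 1 ∧ ∀ i ∈ S, y i = c + 1)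

namespace IsMeetOn

variable {S : Set I} {f g : (I → D3) → D3}

theorem congr (hf : IsMeetOn S f)
    (h : ∀ y c, (∀ i ∈ S, y i = c ∨ y i = c + 1) → g y = f y) : IsMeetOn S g := by
  intro y c hy
  rw [h y c hy]
  exact hf y c hy

theorem apply_eq (hf : IsMeetOn S f) (hg : IsMeetOn S g) {y : I → D3} {c : D3}
    (hy : ∀ i ∈ S, y i = c ∨ y i = c + 1) : f y = g y := by
  have hc : c ≠ c + 1 := by simp
  rcases hf y c hy with ⟨hfy, i, hi, hyi⟩ | ⟨hfy, hall⟩ <;>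
  rcases hg y c hy with ⟨hgy, j, hj, hyj⟩ | ⟨hgy, hall'⟩
  · rw [hfy, hgy]
  · exact absurd (hyi.symm.trans (hall' i hi)) hc
  · exact absurd (hyj.symm.trans (hall j hj)) hc
  · rw [hfy, hgy]

theorem apply_eq_left (hf : IsMeetOn S f) {y : I → D3} {c : D3}
    (hy : ∀ i ∈ S, y i = c ∨ y i = c + 1) (h : ∃ i ∈ S, y i = c) : f y = c := by
  obtain ⟨i, hi, hyi⟩ := h
  rcases hf y c hy with ⟨hfy, -⟩ | ⟨-, hall⟩
  · exact hfy
  · exact absurd (hyi.symm.trans (hall i hi)) (by simp)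

theorem apply_eq_right (hf : IsMeetOn S f) {y : I → D3} {c : D3} (hy : ∀ i ∈ S, y i = c + 1) :
    f y = c + 1 := by
  rcases hf y c fun i hi => Or.inr (hy i hi) with ⟨-, i, hi, hyi⟩ | ⟨hfy, -⟩
  · exact absurd (hyi.symm.trans (hy i hi)) (by simp)
  · exact hfy

theorem apply_edge (hf : IsMeetOn S f) (c : D3) {s : I → Bool} {b : Bool}
    (hb : b = true ↔ ∀ i ∈ S, s i = true) : f (fun i => edge c (s i)) = edge c b := by
  cases b
  · simp only [Bool.false_eq_true, false_iff, not_forall, Bool.not_eq_true] at hb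
    obtain ⟨i, hi, hsi⟩ := hb
    exact hf.apply_eq_left (fun j _ => by cases s j <;> simp) ⟨i, hi, by simp [hsi]⟩
  · exact hf.apply_eq_right fun i hi => by simp [hb.1 rfl i hi]

theorem cycMin (hf : IsMeetOn S f) (hg : IsMeetOn S g) :
    IsMeetOn S fun x => cycMin (f x) (g x) :=
  hf.congr fun y c hy => by simp only [hg.apply_eq hf hy, cycMin_self]

theorem cycMin_proj (hf : IsMeetOn S f) {i : I} (hi : i ∈ S) :
    IsMeetOn S fun x => SelfDualClone.cycMin (f x) (x i) := by
  refine hf.congr fun y c hy => ?_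
  rcases hf y c hy with ⟨hfy, -⟩ | ⟨hfy, hall⟩
  · rcases hy i hi with h | h <;> simp only [hfy, h, cycMin_self, cycMin_add_one]
  · simp only [hfy, hall i hi, cycMin_self]

theorem comp_val {S : Set I} {f : (S → D3) → D3} (hf : IsMeetOn Set.univ f) :
    IsMeetOn S fun x => f fun i => x i := by
  intro y c hy
  refine (hf (fun i => y i) c fun i _ => hy i i.2).imp ?_ ?_
  · rintro ⟨hfy, i, -, hi⟩
    exact ⟨hfy, i, i.2, hi⟩
  · exact fun ⟨hfy, hall⟩ => ⟨hfy, fun i hi => hall ⟨i, hi⟩ trivial⟩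

end IsMeetOn

theorem exists_isMeetOn (ht : IsTerm₂ C cycMin) {T : Finset I} (hT : T.Nonempty) :
    ∃ f : (I → D3) → D3, IsTerm C f ∧ IsMeetOn (T : Set I) f := by
  induction hT using Finset.Nonempty.cons_induction with
  | singleton i =>
    exact ⟨_, isTerm_proj i, fun y c hy => (hy i (by simp)).imp (by simp) (by simp)⟩
  | cons i T _ _ ih =>
    obtain ⟨f, hf, hm⟩ := ih
    refine ⟨_, ht.app (isTerm_proj i) hf, fun y c hy => ?_⟩
    simp only [Finset.coe_cons, Set.mem_insert_iff, forall_eq_or_imp, exists_eq_or_imp] at hy ⊢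
    rcases hm y c hy.2 with ⟨hfy, h⟩ | ⟨hfy, h⟩ <;> rcases hy.1 with hyi | hyi <;>
      simp_all

/-! ### Interpolation by meets -/

theorem exists_isMeetOn_eq_of_pair [Finite I] (hC : IsSelfDualIdem C) (ht : IsTerm₂ C cycMin)
    {S : Set I} {i₀ : I} (hne : ∃ f : (I → D3) → D3, IsTerm C f ∧ IsMeetOn S f)
    (hpair : ∀ a b, S.SurjOn a Set.univ → a i₀ = 0 → S.SurjOn b Set.univ → b i₀ = 0 →
      ∀ g : (I → D3) → D3, ∃ f : (I → D3) → D3, IsTerm C f ∧ IsMeetOn S f ∧ f a = g a ∧ f b = g b)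
    {c : (I → D3) → D3} (hc : IsEquivariant c) :
    ∃ f : (I → D3) → D3, IsTerm C f ∧ IsMeetOn S f ∧ ∀ a, S.SurjOn a Set.univ → f a = c a := by
  classical
  have := Fintype.ofFinite I
  let X := {a : I → D3 // S.SurjOn a Set.univ ∧ a i₀ = 0}
  let R : Set (X → D3) := {r | ∃ f : (I → D3) → D3, IsTerm C f ∧ IsMeetOn S f ∧ ∀ a, r a = f a}
  obtain ⟨r, ⟨f, hf, hm, hr⟩, hrc⟩ := exists_eqOn_of_pair (R := R)
    (hne.elim fun f hf => ⟨fun a => f a, f, hf.1, hf.2, fun _ => rfl⟩)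
    (by
      rintro r ⟨f, hf, hm, hr⟩ r' ⟨f', hf', hm', hr'⟩
      exact ⟨_, ht.app hf hf', hm.cycMin hm', fun a => by simp only [hr, hr']⟩)
    (fun a b g => by
      obtain ⟨f, hf, hm, ha, hb⟩ := hpair a b a.2.1 a.2.2 b.2.1 b.2.2
        fun x => if hx : S.SurjOn x Set.univ ∧ x i₀ = 0 then g ⟨x, hx⟩ else 0
      rw [dif_pos a.2] at ha
      rw [dif_pos b.2] at hb
      exact ⟨fun a => f a, ⟨f, hf, hm, fun _ => rfl⟩, ha, hb⟩)
    Finset.univ (fun a => c a)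
  refine ⟨f, hf, hm, fun a ha => ?_⟩
  have hnorm : S.SurjOn (fun i => a i + -a i₀) Set.univ := fun u _ => by
    obtain ⟨i, hi, hai⟩ := ha (Set.mem_univ (u + a i₀))
    exact ⟨i, hi, by simp [hai]⟩
  have hfc := hrc ⟨_, hnorm, add_neg_cancel _⟩ (Finset.mem_univ _)
  rw [hr] at hfc
  exact add_right_cancel ((hC.isTerm_add hf a _).symm.trans (hfc.trans (hc.add a _)))

theorem exists_isMeetOn_univ_apply_eq [Finite I] [Nonempty I] (ht : IsTerm₂ C cycMin) {a : I → D3}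
    (ha : Function.Surjective a) (u : D3) :
    ∃ f : (I → D3) → D3, IsTerm C f ∧ IsMeetOn Set.univ f ∧ f a = u := by
  have := Fintype.ofFinite I
  obtain ⟨f, hf, hm⟩ := exists_isMeetOn (C := C) ht (Finset.univ_nonempty (α := I))
  rw [Finset.coe_univ] at hm
  let P (u : D3) : Prop := ∃ f : (I → D3) → D3, IsTerm C f ∧ IsMeetOn Set.univ f ∧ f a = u
  refine forall_of_add_one_imp (P := P) ?_ ⟨f, hf, hm, rfl⟩ u
  rintro u ⟨f, hf, hm, hfa⟩
  obtain ⟨i, hi⟩ := ha u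
  exact ⟨_, ht.app hf (isTerm_proj i), hm.cycMin_proj (Set.mem_univ i), by
    simp only [hfa, hi, cycMin_add_one_left]⟩

theorem exists_isMeetOn_univ_eq [Finite I] [Nonempty I] (hC : IsSelfDualIdem C)
    (ht : IsTerm₂ C cycMin) {c : (I → D3) → D3} (hc : IsEquivariant c) :
    ∃ f : (I → D3) → D3, IsTerm C f ∧ IsMeetOn Set.univ f ∧
      ∀ a, Function.Surjective a → f a = c a := by
  obtain ⟨i₀⟩ := ‹Nonempty I›
  simp only [← Set.surjOn_univ]
  have hone (a : I → D3) (ha : Set.univ.SurjOn a Set.univ) (u : D3) :=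
    exists_isMeetOn_univ_apply_eq (C := C) ht (Set.surjOn_univ.1 ha) u
  refine exists_isMeetOn_eq_of_pair (i₀ := i₀) hC ht ?_ (fun a b ha ha₀ hb hb₀ g => ?_) hc
  · have := Fintype.ofFinite I
    simpa using exists_isMeetOn (C := C) ht (⟨i₀, Finset.mem_univ i₀⟩ : (Finset.univ).Nonempty)
  by_cases hab : a = b
  · subst hab
    simpa using hone a ha (g a)
  let W (u v : D3) : Prop :=
    ∃ f : (I → D3) → D3, IsTerm C f ∧ IsMeetOn Set.univ f ∧ f a = u ∧ f b = v
  have hW : (∀ u v, W u v) ∨ ∃ k, ∀ u v, W u v ↔ v = u + k := by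
    refine forall_or_forall_iff_eq_add ?_ (fun u => ?_) (fun v => ?_)
    · rintro _ _ _ _ ⟨f, hf, hm, rfl, rfl⟩ ⟨f', hf', hm', rfl, rfl⟩
      exact ⟨_, ht.app hf hf', hm.cycMin hm', rfl, rfl⟩
    · obtain ⟨f, hf, hm, hfa⟩ := hone a ha u
      exact ⟨f b, f, hf, hm, hfa, rfl⟩
    · obtain ⟨f, hf, hm, hfb⟩ := hone b hb v
      exact ⟨f a, f, hf, hm, rfl, hfb⟩
  rcases hW with h | ⟨k, hk⟩
  · exact h _ _
  -- otherwise `u ↦ u + k` would turn the meet with `a i` into the meet with `b i`, for all `i`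
  exfalso
  obtain ⟨i, hi⟩ := Function.ne_iff.1 hab
  have hmeet (u : D3) (j : I) : cycMin (u + k) (b j) = cycMin u (a j) + k := by
    obtain ⟨f, hf, hm, hfa, hfb⟩ := (hk u (u + k)).2 rfl
    refine (hk _ _).1 ⟨_, ht.app hf (isTerm_proj j), hm.cycMin_proj (Set.mem_univ j), ?_, ?_⟩
    · simp only [hfa]
    · simp only [hfb]
  have hk0 : ∀ k : D3, (∀ u, cycMin (u + k) 0 = cycMin u 0 + k) → k = 0 := by decide
  have hab' : ∀ x y : D3, (∀ u, cycMin u y = cycMin u x) → x = y := by decide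
  obtain rfl := hk0 k fun u => by simpa only [ha₀, hb₀] using hmeet u i₀
  exact hi (hab' _ _ fun u => by simpa using hmeet u i)

theorem exists_isMeetOn_eq_restrict [Finite I] (hC : IsSelfDualIdem C) (ht : IsTerm₂ C cycMin)
    {S : Set I} (hS : S.Nonempty) {c : (S → D3) → D3} (hc : IsEquivariant c) :
    ∃ f : (I → D3) → D3, IsTerm C f ∧ IsMeetOn S f ∧
      ∀ a : I → D3, S.SurjOn a Set.univ → f a = c fun i => a i := by
  have := hS.to_subtype
  obtain ⟨f, hf, hm, hfc⟩ := exists_isMeetOn_univ_eq hC ht hc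
  refine ⟨_, hf.minor Subtype.val, hm.comp_val, fun a ha => hfc _ fun u => ?_⟩
  obtain ⟨i, hi, hai⟩ := ha (Set.mem_univ u)
  exact ⟨⟨i, hi⟩, hai⟩

theorem isEquivariant_proj_add (i : I) (k : D3) : IsEquivariant fun a : I → D3 => a i + k :=
  fun a => add_right_comm (a i) 1 k

/-- `C` has a term that is idempotent in its first three arguments whatever the last one is, but
depends on the last one when the first three are distinct. It makes it possible
to interpolate with regard to variables outside the set on which a meet is taken. -/
def HasSensitiveTerm (C : OpFamily) : Prop :=
  ∃ v, IsTerm₄ C v ∧ (∀ e w, v e e e w = e) ∧ ∃ w w', v 0 1 2 w ≠ v 0 1 2 w'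

theorem IsSelfDualIdem.isTerm₄_add (hC : IsSelfDualIdem C) {g : D3 → D3 → D3 → D3 → D3}
    (hg : IsTerm₄ C g) (x y z w c : D3) :
    g (x + c) (y + c) (z + c) (w + c) = g x y z w + c := by
  simpa using hC.isTerm_add (hg.app (isTerm_proj (0 : Fin 4)) (isTerm_proj 1) (isTerm_proj 2)
    (isTerm_proj 3)) ![x, y, z, w] c

theorem exists_apply_sub_ne : ∀ (φ : D3 → D3) (x y : D3), x ≠ y → (∃ w w', φ w ≠ φ w') →
    ∃ t, φ (x - t) ≠ φ (y - t) := by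
  decide

theorem exists_isMeetOn_eq_add [Finite I] (hC : IsSelfDualIdem C) (ht : IsTerm₂ C cycMin)
    {S : Set I} {i₀ : I} (hi₀ : i₀ ∈ S) (k : D3) :
    ∃ f : (I → D3) → D3, IsTerm C f ∧ IsMeetOn S f ∧
      ∀ a, S.SurjOn a Set.univ → f a = a i₀ + k :=
  exists_isMeetOn_eq_restrict hC ht ⟨i₀, hi₀⟩ (isEquivariant_proj_add (⟨i₀, hi₀⟩ : S) k)

theorem HasSensitiveTerm.exists_isMeetOn_apply_ne [Finite I] (hv : HasSensitiveTerm C)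
    (hC : IsSelfDualIdem C) (ht : IsTerm₂ C cycMin) {S : Set I} {i₀ : I} (hi₀ : i₀ ∈ S)
    {a b : I → D3} (ha : S.SurjOn a Set.univ) (hb : S.SurjOn b Set.univ) (h₀ : a i₀ = b i₀)
    (hab : a ≠ b) :
    ∃ f : (I → D3) → D3, IsTerm C f ∧ IsMeetOn S f ∧ f a ≠ f b := by
  obtain ⟨v, hv, hidem, hne⟩ := hv
  obtain ⟨l, hl⟩ := Function.ne_iff.1 hab
  obtain ⟨e, he⟩ := exists_apply_sub_ne (v 0 1 2) (a l) (b l) hl hne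
  choose f hf hm hfa using fun k => exists_isMeetOn_eq_add hC ht hi₀ (k + e - a i₀)
  refine ⟨_, hv.app (hf 0) (hf 1) (hf 2) (isTerm_proj l), (hm 0).congr fun y c hy => ?_, ?_⟩
  · rw [(hm 1).apply_eq (hm 0) hy, (hm 2).apply_eq (hm 0) hy, hidem]
  · have hshift (w : D3) : v (0 + e) (1 + e) (2 + e) w = v 0 1 2 (w - e) + e := by
      rw [← hC.isTerm₄_add hv, sub_add_cancel]
    simp only [hfa _ a ha, hfa _ b hb, ← h₀, add_sub_cancel, hshift]
    exact fun h => he (add_right_cancel h)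

theorem exists_isMeetOn_apply_eq_apply_eq [Finite I] (hC : IsSelfDualIdem C)
    (ht : IsTerm₂ C cycMin) {S : Set I} {i₀ : I} (hi₀ : i₀ ∈ S) {a b : I → D3}
    (ha : S.SurjOn a Set.univ) (hb : S.SurjOn b Set.univ) (ha₀ : a i₀ = 0) (hb₀ : b i₀ = 0)
    (hab : ¬S.EqOn b a) (u v : D3) :
    ∃ f : (I → D3) → D3, IsTerm C f ∧ IsMeetOn S f ∧ f a = u ∧ f b = v := by
  classical
  let i : S := ⟨i₀, hi₀⟩
  let c (x : S → D3) : D3 := x i + if (fun j => x j - x i) = (fun j : S => a j) then u else v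
  have hc : IsEquivariant c := fun x => by
    simp only [c, add_sub_add_right_eq_sub]
    exact add_right_comm _ _ _
  obtain ⟨f, hf, hm, hfc⟩ := exists_isMeetOn_eq_restrict hC ht ⟨i₀, hi₀⟩ hc
  refine ⟨f, hf, hm, (hfc a ha).trans ?_, (hfc b hb).trans ?_⟩
  · simp [c, i, ha₀]
  · have hba : ¬(fun j : S => b j) = fun j : S => a j := fun h => hab fun j hj => congrFun h ⟨j, hj⟩
    simp [c, i, hb₀, hba]

theorem HasSensitiveTerm.exists_isMeetOn_eq [Finite I] (hv : HasSensitiveTerm C)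
    (hC : IsSelfDualIdem C) (ht : IsTerm₂ C cycMin) {S : Set I} (hS : S.Nonempty)
    {c : (I → D3) → D3} (hc : IsEquivariant c) :
    ∃ f : (I → D3) → D3, IsTerm C f ∧ IsMeetOn S f ∧ ∀ a, S.SurjOn a Set.univ → f a = c a := by
  obtain ⟨i₀, hi₀⟩ := hS
  have hadd (k : D3) := exists_isMeetOn_eq_add (C := C) hC ht hi₀ k
  refine exists_isMeetOn_eq_of_pair (i₀ := i₀) hC ht
    ((hadd 0).imp fun f hf => ⟨hf.1, hf.2.1⟩) (fun a b ha ha₀ hb hb₀ g => ?_) hc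
  by_cases hS : S.EqOn b a
  swap
  · exact exists_isMeetOn_apply_eq_apply_eq hC ht hi₀ ha hb ha₀ hb₀ hS _ _
  let W (u v : D3) : Prop :=
    ∃ f : (I → D3) → D3, IsTerm C f ∧ IsMeetOn S f ∧ f a = u ∧ f b = v
  have hdiag (u : D3) : W u u := by
    obtain ⟨f, hf, hm, hfk⟩ := hadd u
    exact ⟨f, hf, hm, by simp [hfk a ha, ha₀], by simp [hfk b hb, hb₀]⟩
  have hW : (∀ u v, W u v) ∨ ∃ k, ∀ u v, W u v ↔ v = u + k := by
    refine forall_or_forall_iff_eq_add ?_ (fun u => ⟨u, hdiag u⟩) (fun u => ⟨u, hdiag u⟩)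
    rintro _ _ _ _ ⟨f, hf, hm, rfl, rfl⟩ ⟨f', hf', hm', rfl, rfl⟩
    exact ⟨_, ht.app hf hf', hm.cycMin hm', rfl, rfl⟩
  by_cases hab : a = b
  · subst hab
    obtain ⟨f, hf, hm, hfa, -⟩ := hdiag (g a)
    exact ⟨f, hf, hm, hfa, hfa⟩
  rcases hW with h | ⟨k, hk⟩
  · exact h _ _
  · obtain rfl : k = 0 := by simpa using ((hk 0 0).1 (hdiag 0)).symm
    obtain ⟨f, hf, hm, hne⟩ :=
      hv.exists_isMeetOn_apply_ne hC ht hi₀ ha hb (ha₀.trans hb₀.symm) hab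
    exact absurd ((hk _ _).1 ⟨f, hf, hm, rfl, rfl⟩) (by simpa using hne.symm)

/-! ### The Boolean clone of traces -/

/-- `B` is the Boolean action of a term of `C`. These Boolean operations form a clone. -/
def IsTrace (C : OpFamily) (B : (I → Bool) → Bool) : Prop := ∃ f, IsTerm C f ∧ HasTrace f B

theorem isTrace_proj (i : I) : IsTrace C fun s => s i := ⟨_, isTerm_proj i, hasTrace_proj i⟩

theorem IsTrace.comp {B : (I → Bool) → Bool} {B' : I → (J → Bool) → Bool} (hB : IsTrace C B)
    (hB' : ∀ i, IsTrace C (B' i)) : IsTrace C fun s => B fun i => B' i s := by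
  obtain ⟨f, hf, hfB⟩ := hB
  choose g hg hgB using hB'
  exact ⟨_, hf.comp hg, hfB.comp hgB⟩

theorem isTrace_decide_forall (ht : IsTerm₂ C cycMin) {T : Finset ι} (hT : T.Nonempty)
    {B : ι → (I → Bool) → Bool} (hB : ∀ t, IsTrace C (B t)) :
    IsTrace C fun s => decide (∀ t ∈ T, B t s = true) := by
  obtain ⟨m, hm, hmeet⟩ := exists_isMeetOn ht hT
  exact IsTrace.comp (B := fun s => decide (∀ t ∈ T, s t = true))
    ⟨m, hm, fun c s => hmeet.apply_edge c (by simp)⟩ hB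

theorem IsTrace.and (ht : IsTerm₂ C cycMin) {B B' : (I → Bool) → Bool} (hB : IsTrace C B)
    (hB' : IsTrace C B') : IsTrace C fun s => B s && B' s := by
  obtain ⟨f, hf, hfB⟩ := hB
  obtain ⟨g, hg, hgB⟩ := hB'
  exact ⟨_, ht.app hf hg, fun c s => by simp only [hfB c s, hgB c s, cycMin_edge]⟩

theorem IsConservative.isTrace_trace (hc : IsConservative C) (hC : IsSelfDualIdem C)
    {f : (I → D3) → D3} (hf : IsTerm C f) : IsTrace C (trace f) :=
  ⟨f, hf, hc.hasTrace_trace hC hf⟩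

/-- Some ternary term of `C` acts as `B` on two-element subsets. -/
def HasTernaryTrace (C : OpFamily) (B : Bool → Bool → Bool → Bool) : Prop :=
  ∃ g, IsTerm₃ C g ∧ HasTrace₃ g B

theorem IsTrace.hasTernaryTrace {B : Bool → Bool → Bool → Bool}
    (hB : IsTrace C fun s : Fin 3 → Bool => B (s 0) (s 1) (s 2)) : HasTernaryTrace C B := by
  obtain ⟨f, hf, hfB⟩ := hB
  have heta (x : Fin 3 → D3) : ![x 0, x 1, x 2] = x := by
    ext i
    fin_cases i <;> rfl
  refine ⟨fun x y z => f ![x, y, z], by simpa only [IsTerm₃, heta] using hf, fun c x y z => ?_⟩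
  have h := hfB c ![x, y, z]
  rwa [← heta fun i => edge c (![x, y, z] i)] at h

theorem HasTernaryTrace.isTrace {B : Bool → Bool → Bool → Bool} (hB : HasTernaryTrace C B)
    {B₀ B₁ B₂ : (I → Bool) → Bool} (h₀ : IsTrace C B₀) (h₁ : IsTrace C B₁) (h₂ : IsTrace C B₂) :
    IsTrace C fun s => B (B₀ s) (B₁ s) (B₂ s) := by
  obtain ⟨g, hg, hgB⟩ := hB
  obtain ⟨f₀, hf₀, hfB₀⟩ := h₀
  obtain ⟨f₁, hf₁, hfB₁⟩ := h₁
  obtain ⟨f₂, hf₂, hfB₂⟩ := h₂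
  exact ⟨_, hg.app hf₀ hf₁ hf₂, hgB.app hfB₀ hfB₁ hfB₂⟩

theorem hasTernaryTrace_and_or_of_and_imp (h : HasTernaryTrace C fun x y z => x && (!y || z)) :
    HasTernaryTrace C fun x y z => x && (y || z) := by
  have hx : IsTrace C fun s : Fin 3 → Bool => s 0 := isTrace_proj 0
  have hz : IsTrace C fun s : Fin 3 → Bool => s 2 := isTrace_proj 2
  refine IsTrace.hasTernaryTrace ?_
  convert h.isTrace hx (h.isTrace hx (isTrace_proj 1) hz) hz using 2 with s
  cases s 0 <;> cases s 1 <;> cases s 2 <;> rfl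

theorem exists_isTerm_join {g : D3 → D3 → D3 → D3} (hg : IsTerm₃ C g)
    (hgB : HasTrace₃ g fun x y z => x && (y || z)) {T : Finset ι} (hT : T.Nonempty)
    {X : (I → D3) → D3} (hX : IsTerm C X) {k : ι → (I → D3) → D3} (hk : ∀ t ∈ T, IsTerm C (k t)) :
    ∃ f : (I → D3) → D3, IsTerm C f ∧ ∀ y c (b₀ : Bool) (b : ι → Bool), X y = edge c b₀ →
      (∀ t ∈ T, k t y = edge c (b t)) → f y = edge c (b₀ && decide (∃ t ∈ T, b t = true)) := by
  induction hT using Finset.Nonempty.cons_induction with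
  | singleton t =>
    refine ⟨_, hg.app hX (hk t (by simp)) (hk t (by simp)), fun y c b₀ b h₀ h => ?_⟩
    simp only [h₀, h t (by simp), hgB c]
    simp
  | cons t T _ _ ih =>
    simp only [Finset.forall_mem_cons] at hk ⊢
    obtain ⟨f, hf, hfk⟩ := ih hk.2
    refine ⟨_, hg.app hX hk.1 hf, fun y c b₀ b h₀ h => ?_⟩
    simp only [h₀, h.1, hfk y c b₀ b h₀ h.2, hgB c, Finset.mem_cons, exists_eq_or_imp]
    cases b₀ <;> simp

/-! ### Dominated, monotone and conjunctive traces -/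

/-- The trace of every operation in `C` lies below some variable. -/
def TracesDominated (C : OpFamily) : Prop :=
  ∀ n, ∀ f ∈ C n, ∃ i, ∀ s, trace f s = true → s i = true

/-- The trace of every operation in `C` is monotone. -/
def TracesMonotone (C : OpFamily) : Prop := ∀ n, ∀ f ∈ C n, Monotone (trace f)

/-- `B` is the conjunction of the variables in `S`. -/
def IsConjunction (B : (I → Bool) → Bool) (S : Set I) : Prop :=
  ∀ s, B s = true ↔ ∀ i ∈ S, s i = true

/-- The trace of every operation in `C` is a conjunction of variables. -/
def TracesConjunctive (C : OpFamily) : Prop := ∀ n, ∀ f ∈ C n, ∃ S, IsConjunction (trace f) S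

theorem IsTrace.const_true (hC : IsSelfDualIdem C) {B : (I → Bool) → Bool} (hB : IsTrace C B) :
    B (fun _ => true) = true := by
  obtain ⟨f, hf, hfB⟩ := hB
  exact hfB.trace_eq ▸ trace_const_true hC hf

theorem IsTrace.const_false (hC : IsSelfDualIdem C) {B : (I → Bool) → Bool} (hB : IsTrace C B) :
    B (fun _ => false) = false := by
  obtain ⟨f, hf, hfB⟩ := hB
  exact hfB.trace_eq ▸ trace_const_false hC hf

/-! ### Near-unanimity from undominated traces -/

theorem HasTrace.isNearUnanimity {f : (I → D3) → D3} {B : (I → Bool) → Bool}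
    (hf : HasTrace f B) (hB : ∀ i s b, (∀ j, j ≠ i → s j = b) → B s = b) :
    IsNearUnanimity f := by
  classical
  intro x i v hv
  by_cases h : v i = x + 1 + 1
  · have hedge : v = fun j => edge (v i) (decide (j ≠ i)) := by
      funext j
      by_cases hj : j = i
      · simp [hj]
      · simp [hv j hj, hj, h, add_one_add_one_add_one]
    rw [hedge, hf, hB i _ true fun j hj => by simpa using hj, h]
    exact add_one_add_one_add_one x
  · have hedge : v = fun j => edge x (decide (v j ≠ x)) := by
      funext j
      by_cases hj : j = i
      · rcases eq_or_eq_add_one_or_eq_add_one_add_one (v i) x with h' | h' | h'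
        · simp [hj, h']
        · simp [hj, h']
        · exact absurd h' h
      · simp [hv j hj]
    rw [hedge, hf, hB i _ false fun j hj => by simp [hv j hj]]
    rfl

theorem exists_isTrace_of_not_tracesDominated (hC : IsSelfDualIdem C) (hc : IsConservative C)
    (ht : IsTerm₂ C cycMin) (h : ¬TracesDominated C) :
    ∃ n, ∃ B : (Fin n → Bool) → Bool, IsTrace C B ∧ Nonempty (Fin n) ∧
      ∀ i s, (∀ j, j ≠ i → s j = true) → B s = true := by
  simp only [TracesDominated] at h
  push Not at h
  obtain ⟨n, f, hf, hs⟩ := h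
  choose s hfs hsi using hs
  have hf := hC.isTerm_iff_mem.2 hf
  have hcomp := (hc.isTrace_trace hC hf).comp fun i =>
    isTrace_decide_forall (T := Finset.univ.filter fun j => s j i = false) ht
      ⟨i, by simpa using hsi i⟩ isTrace_proj
  refine ⟨n, _, hcomp, hC.nonempty_of_isTerm hf, fun i t hti => ?_⟩
  cases h : t i
  · refine (congrArg (trace f) (funext fun k => ?_)).trans (hfs i)
    cases hk : s i k
    · rw [decide_eq_false_iff_not]
      exact fun hall => by simp [hall i (by simpa using hk)] at h
    · simp only [decide_eq_true_eq]
      exact fun j hj => hti j (by rintro rfl; simp [hk] at hj)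
  · have htop : t = fun _ => true := by
      funext j
      by_cases hj : j = i
      · rw [hj, h]
      · exact hti j hj
    rw [htop]
    exact hcomp.const_true hC

theorem hasNearUnanimity_of_not_tracesDominated (hC : IsSelfDualIdem C) (hc : IsConservative C)
    (ht : IsTerm₂ C cycMin) (h : ¬TracesDominated C) : ∃ k, HasNearUnanimity C k := by
  obtain ⟨n, B, hB, ⟨i₀⟩, hBtrue⟩ := exists_isTrace_of_not_tracesDominated hC hc ht h
  obtain ⟨f, hf, hfB⟩ := isTrace_decide_forall (T := Finset.univ) ht
    (Finset.univ_nonempty (α := Fin (n + 1)))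
    fun l => hB.comp fun j => isTrace_proj (C := C) (l.succAbove j)
  refine ⟨n, f, hC.isTerm_iff_mem.1 hf, hfB.isNearUnanimity fun p s b hs => ?_⟩
  cases b
  · rw [decide_eq_false_iff_not]
    intro hall
    have hp := hall p (Finset.mem_univ p)
    simp only [hs _ (Fin.succAbove_ne p _), hB.const_false hC, Bool.false_eq_true] at hp
  · simp only [decide_eq_true_eq]
    intro l _
    by_cases hl : ∃ i, l.succAbove i = p
    · obtain ⟨i, rfl⟩ := hl
      exact hBtrue i _ fun j hj => hs _ fun h => hj (Fin.succAbove_right_injective h)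
    · exact hBtrue i₀ _ fun j _ => hs _ fun h => hl ⟨j, h⟩

/-! ### Ternary traces -/

theorem hasTernaryTrace_and_imp_of_not_tracesMonotone (hC : IsSelfDualIdem C)
    (hc : IsConservative C) (ht : IsTerm₂ C cycMin) (hd : TracesDominated C)
    (h : ¬TracesMonotone C) : HasTernaryTrace C fun x y z => x && (!y || z) := by
  simp only [TracesMonotone, Monotone] at h
  push Not at h
  obtain ⟨n, f, hf, a, b, hab, h⟩ := h
  obtain ⟨hfb, hfa⟩ := Bool.lt_iff.1 (h)
  obtain ⟨i, hi⟩ := hd n f hf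
  have hf := hC.isTerm_iff_mem.2 hf
  have hx : IsTrace C fun s : Fin 3 → Bool => s 0 := isTrace_proj 0
  have hy : IsTrace C fun s : Fin 3 → Bool => s 1 := isTrace_proj 1
  have hz : IsTrace C fun s : Fin 3 → Bool => s 2 := isTrace_proj 2
  have hinner (j : Fin n) : IsTrace C fun s : Fin 3 → Bool =>
      if a j then s 0 else if b j then s 1 else s 1 && s 2 := by
    cases a j
    · cases b j
      · exact hy.and ht hz
      · exact hy
    · exact hx
  refine IsTrace.hasTernaryTrace ?_
  convert (hc.isTrace_trace hC hf).comp hinner using 2 with s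
  cases hs0 : s 0
  · refine (Bool.eq_false_iff.2 fun hcon => ?_).symm
    simpa [hi a hfa] using hi _ hcon
  · cases hs1 : s 1
    · simpa using hfa.symm
    · cases hs2 : s 2
      · have hor (j : Fin n) : (a j || b j) = b j := sup_eq_right.2 (hab j)
        simpa [hor] using hfb.symm
      · simpa using (trace_const_true hC hf).symm

theorem exists_isConjunction [Finite I] {B : (I → Bool) → Bool} (hmono : Monotone B)
    (htop : B ⊤ = true) (hinf : ∀ a b, B a = true → B b = true → B (a ⊓ b) = true) :
    ∃ S, IsConjunction B S := by
  classical
  have := Fintype.ofFinite I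
  let s₀ := (Finset.univ.filter fun s => B s = true).inf id
  have hs₀ : B s₀ = true :=
    Finset.inf_induction (p := fun s => B s = true) htop (fun a ha b hb => hinf a b ha hb) (by simp)
  refine ⟨{i | s₀ i = true}, fun s => ⟨fun hs i hi => ?_, fun hs => ?_⟩⟩
  · exact Finset.inf_le (f := id) (b := s) (by simpa using hs) i hi
  · exact hmono (show s₀ ≤ s from hs) hs₀

theorem hasTernaryTrace_and_or_of_not_tracesConjunctive (hC : IsSelfDualIdem C)
    (hc : IsConservative C) (ht : IsTerm₂ C cycMin) (hm : TracesMonotone C)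
    (h : ¬TracesConjunctive C) : HasTernaryTrace C fun x y z => x && (y || z) := by
  simp only [TracesConjunctive] at h
  push Not at h
  obtain ⟨n, f, hf, hS⟩ := h
  have hmono := hm n f hf
  have hf := hC.isTerm_iff_mem.2 hf
  obtain ⟨a, b, ha, hb, hab⟩ : ∃ a b, trace f a = true ∧ trace f b = true ∧
      trace f (a ⊓ b) = false := by
    by_contra! hinf
    obtain ⟨S, hS'⟩ := exists_isConjunction hmono (trace_const_true hC hf) (by simpa using hinf)
    exact hS S hS'
  have hx : IsTrace C fun s : Fin 3 → Bool => s 0 := isTrace_proj 0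
  have hy : IsTrace C fun s : Fin 3 → Bool => s 1 := isTrace_proj 1
  have hz : IsTrace C fun s : Fin 3 → Bool => s 2 := isTrace_proj 2
  have hinner (j : Fin n) : IsTrace C fun s : Fin 3 → Bool =>
      s 0 && ((a j || s 1) && (b j || s 2)) := by
    cases a j <;> cases b j <;>
      simp only [Bool.true_or, Bool.false_or, Bool.and_true, Bool.true_and]
    exacts [hx.and ht (hy.and ht hz), hx.and ht hy, hx.and ht hz, hx]
  refine IsTrace.hasTernaryTrace ?_
  convert (hc.isTrace_trace hC hf).comp hinner using 2 with s
  cases s 0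
  · simpa using (trace_const_false hC hf).symm
  · cases s 1 <;> cases s 2
    · simpa [Pi.inf_def] using hab.symm
    · simpa using ha.symm
    · simpa using hb.symm
    · simpa using (trace_const_true hC hf).symm

/-! ### Clones with `x ∧ (¬y ∨ z)` -/

theorem isTrace_and_exists (hG : HasTernaryTrace C fun x y z => x && (y || z)) {T : Finset ι}
    (hT : T.Nonempty) {B₀ : (I → Bool) → Bool} (h₀ : IsTrace C B₀) {B : ι → (I → Bool) → Bool}
    (hB : ∀ t, IsTrace C (B t)) :
    IsTrace C fun s => B₀ s && decide (∃ t ∈ T, B t s = true) := by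
  obtain ⟨g, hg, hgB⟩ := hG
  obtain ⟨X, hX, hXB⟩ := h₀
  choose k hk hkB using hB
  obtain ⟨f, hf, hfk⟩ := exists_isTerm_join hg hgB hT hX fun t _ => hk t
  exact ⟨f, hf, fun c s => hfk _ c _ (B · s) (hXB c s) fun t _ => hkB t c s⟩

theorem exists_isTrace_eq_true_iff [Finite I] (ht : IsTerm₂ C cycMin)
    (hJ : HasTernaryTrace C fun x y z => x && (!y || z)) (i₀ : I) (t : I → Bool) :
    ∃ B, IsTrace C B ∧
      ∀ s, B s = true ↔ s i₀ = true ∧ (s = t ∨ s = fun _ => true) := by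
  classical
  have := Fintype.ofFinite I
  have huniv : (Finset.univ : Finset I).Nonempty := ⟨i₀, Finset.mem_univ i₀⟩
  obtain ⟨A, hA, hAs⟩ : ∃ A, IsTrace C A ∧ ∀ s : I → Bool, A s = true ↔ ∀ i, s i = true :=
    ⟨_, isTrace_decide_forall ht huniv isTrace_proj, by simp⟩
  have hcoord (i : I) : IsTrace C fun s =>
      if t i then s i₀ && s i else s i₀ && (!s i || A s) := by
    cases t i
    · exact hJ.isTrace (isTrace_proj i₀) (isTrace_proj i) hA
    · exact (isTrace_proj i₀).and ht (isTrace_proj i)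
  refine ⟨_, isTrace_decide_forall ht huniv hcoord, fun s => ?_⟩
  simp only [Finset.mem_univ, true_imp_iff, decide_eq_true_eq]
  refine ⟨fun h => ?_, ?_⟩
  · have hs₀ : s i₀ = true := by
      have := h i₀
      split_ifs at this <;> exact (Bool.and_eq_true_iff.1 this).1
    by_cases htop : ∀ j, s j = true
    · exact ⟨hs₀, Or.inr (funext htop)⟩
    · refine ⟨hs₀, Or.inl (funext fun i => ?_)⟩
      have := h i
      simp only [hs₀, Bool.eq_false_iff.2 (mt (hAs s).1 htop), Bool.or_false, Bool.true_and] at this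
      cases hi : t i <;> simpa [hi] using this
  · rintro ⟨hs₀, rfl | rfl⟩ i
    · cases s i <;> simp [hs₀]
    · simp [(hAs _).2 fun _ => rfl]

theorem isTrace_of_le_proj [Finite I] (ht : IsTerm₂ C cycMin)
    (hJ : HasTernaryTrace C fun x y z => x && (!y || z)) {B : (I → Bool) → Bool} {i₀ : I}
    (hle : ∀ s, B s = true → s i₀ = true) (htop : B (fun _ => true) = true) : IsTrace C B := by
  classical
  have := Fintype.ofFinite I
  choose D hD hDs using exists_isTrace_eq_true_iff ht hJ i₀
  convert isTrace_and_exists (hasTernaryTrace_and_or_of_and_imp hJ)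
    (T := Finset.univ.filter (B · = true)) ⟨fun _ => true, by simp [htop]⟩ (isTrace_proj i₀) hD
    using 2 with s
  rw [Bool.eq_iff_iff, Bool.and_eq_true, decide_eq_true_eq]
  refine ⟨fun hs => ⟨hle s hs, s, by simpa using hs, (hDs s s).2 ⟨hle s hs, Or.inl rfl⟩⟩, ?_⟩
  rintro ⟨-, t, htB, hts⟩
  obtain ⟨-, rfl | rfl⟩ := (hDs t s).1 hts
  · simpa using htB
  · exact htop

theorem exists_isTerm_hasTrace_correct [Finite I] [Nonempty I] (hC : IsSelfDualIdem C)
    (ht : IsTerm₂ C cycMin) (hJ : HasTernaryTrace C fun x y z => x && (!y || z))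
    {f g : (I → D3) → D3} (hf : IsEquivariant f) (hg : IsTerm C g) {B : (I → Bool) → Bool}
    (hgB : HasTrace g B) :
    ∃ g', IsTerm C g' ∧ HasTrace g' B ∧
      ∀ a, Function.Surjective a → g' a = if g a = f a then g a else g a + 2 := by
  obtain ⟨j, hj, hjB⟩ := hJ
  have hg_equi : IsEquivariant g := fun x => hC.isTerm_add_one hg x
  have hshift : IsEquivariant fun a => if g a = f a then g a else g a + 2 := fun a => by
    simp only [hg_equi a, hf a, add_left_inj]
    split_ifs
    · rfl
    · exact add_right_comm _ _ _
  obtain ⟨p, hp, hpm, hpa⟩ := exists_isMeetOn_univ_eq hC ht hg_equi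
  obtain ⟨q, hq, hqm, hqa⟩ := exists_isMeetOn_univ_eq hC ht hshift
  refine ⟨_, hj.app hg hp hq, fun c s => ?_, fun a ha => ?_⟩
  · classical
    have hb : decide (∀ i ∈ Set.univ, s i = true) = true ↔ ∀ i ∈ Set.univ, s i = true :=
      decide_eq_true_iff
    simp only [hgB c s, hpm.apply_edge c hb, hqm.apply_edge c hb, hjB c, Bool.not_or_self,
      Bool.and_true]
  · simp only [hpa a ha, hqa a ha]
    split_ifs
    · exact hjB (g a) false false false
    · have hedge : ∀ x : D3, x = edge (x + 2) true := by decide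
      have := hjB (g a + 2) true true false
      rwa [← hedge (g a)] at this

theorem IsConservative.subset_of_tracesDominated (hc : IsConservative C) (hC : IsSelfDualIdem C)
    (hC' : IsSelfDualIdem C') (hd : TracesDominated C) (ht : IsTerm₂ C' cycMin)
    (hJ : HasTernaryTrace C' fun x y z => x && (!y || z)) (n : ℕ) : C n ⊆ C' n := by
  intro f hfn
  have hf := hC.isTerm_iff_mem.2 hfn
  have hf_equi : IsEquivariant f := fun x => hC.isTerm_add_one hf x
  obtain ⟨i₀, hle⟩ := hd n f hfn
  have : Nonempty (Fin n) := ⟨i₀⟩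
  obtain ⟨g, hg, hgB⟩ := isTrace_of_le_proj ht hJ hle (trace_const_true hC hf)
  -- every wrong value becomes right after at most two shifts by `2`
  obtain ⟨g₁, hg₁, hgB₁, hga₁⟩ := exists_isTerm_hasTrace_correct hC' ht hJ hf_equi hg hgB
  obtain ⟨g₂, hg₂, hgB₂, hga₂⟩ := exists_isTerm_hasTrace_correct hC' ht hJ hf_equi hg₁ hgB₁
  have heq : g₂ = f := by
    funext a
    rcases exists_edge_or_surjective a with ⟨c, s, rfl⟩ | ha
    · rw [hgB₂ c s, hc.hasTrace_trace hC hf]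
    · rw [hga₂ a ha, hga₁ a ha]
      have hround : ∀ x y : D3, (if (if x = y then x else x + 2) = y then
          (if x = y then x else x + 2) else (if x = y then x else x + 2) + 2) = y := by decide
      exact hround (g a) (f a)
  exact heq ▸ hC'.isTerm_iff_mem.1 hg₂

/-! ### Conjunctions that depend on no other variable -/

theorem IsConjunction.dependsOn {B : (I → Bool) → Bool} {S : Set I} (h : IsConjunction B S) :
    DependsOn B S := fun s t hst => by
  rw [Bool.eq_iff_iff, h s, h t]
  exact forall₂_congr fun i hi => by rw [hst i hi]

theorem IsConjunction.nonempty (hC : IsSelfDualIdem C) {f : (I → D3) → D3} (hf : IsTerm C f)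
    {S : Set I} (hS : IsConjunction (trace f) S) : S.Nonempty := by
  by_contra! hempty
  have htrue := (hS fun _ => false).2 (by simp [hempty])
  exact Bool.false_ne_true ((trace_const_false hC hf).symm.trans htrue)

/-- The trace of every operation in `C` is a conjunction, and the operation depends only on the
variables of that conjunction. -/
def IsConjunctive (C : OpFamily) : Prop :=
  ∀ n, ∀ f ∈ C n, ∃ S, IsConjunction (trace f) S ∧ DependsOn f S

theorem surjOn_or_exists_edge (S : Set I) (a : I → D3) :
    S.SurjOn a Set.univ ∨ ∃ c, ∀ i ∈ S, a i = c ∨ a i = c + 1 := by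
  by_cases h : S.SurjOn a Set.univ
  · exact Or.inl h
  obtain ⟨u, -, hu⟩ := Set.not_subset.1 h
  have havoid : ∀ u x : D3, x ≠ u → x = u + 1 ∨ x = u + 1 + 1 := by decide
  exact Or.inr ⟨u + 1, fun i hi => havoid u _ fun hx => hu ⟨i, hi, hx⟩⟩

theorem IsConservative.isMeetOn_of_dependsOn (hc : IsConservative C) (hC : IsSelfDualIdem C)
    {f : (I → D3) → D3} (hf : IsTerm C f) {S : Set I} (hS : IsConjunction (trace f) S)
    (hd : DependsOn f S) : IsMeetOn S f := by
  intro y c hy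
  have hedge : ∀ c x : D3, x = c ∨ x = c + 1 → x = edge c (decide (x = c + 1)) := by decide
  have hfy : f y = edge c (trace f fun i => decide (y i = c + 1)) := by
    rw [← hc.hasTrace_trace hC hf]
    exact hd fun i hi => hedge c (y i) (hy i hi)
  have hiff := hS fun i => decide (y i = c + 1)
  simp only [decide_eq_true_eq] at hiff
  by_cases hall : ∀ i ∈ S, y i = c + 1
  · exact Or.inr ⟨by rw [hfy, hiff.2 hall, edge_true], hall⟩
  · refine Or.inl ⟨by rw [hfy, Bool.eq_false_iff.2 (mt hiff.1 hall), edge_false], ?_⟩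
    push Not at hall
    obtain ⟨i, hi, hne⟩ := hall
    exact ⟨i, hi, (hy i hi).resolve_right hne⟩

theorem IsConjunctive.subset (hp : IsConjunctive C) (hC : IsSelfDualIdem C)
    (hC' : IsSelfDualIdem C') (hc : IsConservative C) (ht : IsTerm₂ C' cycMin) (n : ℕ) :
    C n ⊆ C' n := by
  classical
  intro f hfn
  obtain ⟨S, hS, hd⟩ := hp n f hfn
  have hf := hC.isTerm_iff_mem.2 hfn
  obtain ⟨i₀, hi₀⟩ := hS.nonempty hC hf
  let extend (x : S → D3) (i : Fin n) : D3 := if h : i ∈ S then x ⟨i, h⟩ else x ⟨i₀, hi₀⟩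
  have hequi : IsEquivariant fun x => f (extend x) := fun x => by
    refine (congrArg f (funext fun i => ?_)).trans (hC.isTerm_add_one hf (extend x))
    simp only [extend]
    split_ifs <;> rfl
  obtain ⟨g, hg, hgm, hga⟩ := exists_isMeetOn_eq_restrict hC' ht ⟨i₀, hi₀⟩ hequi
  have heq : g = f := by
    funext a
    rcases surjOn_or_exists_edge S a with ha | ⟨c, hac⟩
    · rw [hga a ha]
      exact hd fun i hi => by simp [extend, hi]
    · exact hgm.apply_eq (hc.isMeetOn_of_dependsOn hC hf hS hd) hac
  exact heq ▸ hC'.isTerm_iff_mem.1 hg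

theorem dependsOn_of_update [Finite I] [DecidableEq I] {f : (I → D3) → D3} {S : Set I}
    (h : ∀ y, ∀ i ∉ S, ∀ w, f (Function.update y i w) = f y) : DependsOn f S := by
  classical
  have := Fintype.ofFinite I
  intro a b hab
  have hpiecewise (T : Finset I) (hT : ∀ i ∈ T, i ∉ S) : f (T.piecewise b a) = f a := by
    induction T using Finset.induction_on with
    | empty => rw [Finset.piecewise_empty]
    | insert i T _ ih =>
      rw [Finset.piecewise_insert, h _ i (hT i (Finset.mem_insert_self i T))]
      exact ih fun j hj => hT j (Finset.mem_insert_of_mem hj)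
  rw [← hpiecewise (Finset.univ.filter (· ∉ S)) (by simp)]
  congr 1
  funext i
  by_cases hi : i ∈ S <;> simp [Finset.piecewise, hi, hab]

theorem exists_isTerm₃_apply_eq (hC : IsSelfDualIdem C) (ht : IsTerm₂ C cycMin) (u : D3) :
    ∃ M, IsTerm₃ C M ∧ (∀ e, M e e e = e) ∧ M 0 1 2 = u := by
  obtain ⟨f, hf, -, hfa⟩ := exists_isMeetOn_univ_eq hC ht (isEquivariant_proj_add (0 : Fin 3) u)
  have heta (x : Fin 3 → D3) : ![x 0, x 1, x 2] = x := by
    ext i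
    fin_cases i <;> rfl
  refine ⟨fun x y z => f ![x, y, z], by simpa only [IsTerm₃, heta] using hf, fun e => ?_, ?_⟩
  · exact (congrArg f (heta fun _ => e)).trans (hC.isTerm_const hf e)
  · exact (hfa _ (by decide)).trans (zero_add u)

theorem IsConjunction.apply_update_const [DecidableEq I] (hC : IsSelfDualIdem C)
    (hc : IsConservative C) {f : (I → D3) → D3} (hf : IsTerm C f) {S : Set I}
    (hS : IsConjunction (trace f) S) {l : I} (hl : l ∉ S) (e w : D3) :
    f (Function.update (fun _ => e) l w) = e := by
  have hedge : ∀ e w : D3, ∃ c b b', e = edge c b ∧ w = edge c b' := by decide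
  obtain ⟨c, b, b', rfl, rfl⟩ := hedge e w
  have htrace := hc.hasTrace_trace hC hf
  calc f (Function.update (fun _ => edge c b) l (edge c b'))
      = f fun i => edge c (Function.update (fun _ => b) l b' i) := by
        simp only [Function.apply_update fun _ => edge c]
    _ = edge c (trace f (Function.update (fun _ => b) l b')) := htrace c _
    _ = edge c (trace f fun _ => b) := by
        congr 1
        exact hS.dependsOn fun i hi => Function.update_of_ne (ne_of_mem_of_not_mem hi hl) _ _
    _ = edge c b := by rw [← htrace, hC.isTerm_const hf]

theorem hasSensitiveTerm_of_update_ne [DecidableEq I] (hC : IsSelfDualIdem C)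
    (hc : IsConservative C) (ht : IsTerm₂ C cycMin) {f : (I → D3) → D3} (hf : IsTerm C f)
    {S : Set I} (hS : IsConjunction (trace f) S) {l : I} (hl : l ∉ S) {y : I → D3} {w : D3}
    (hne : f (Function.update y l w) ≠ f y) : HasSensitiveTerm C := by
  choose M hM hidem hM012 using exists_isTerm₃_apply_eq hC ht
  refine ⟨fun p q r u => f (Function.update (fun i => M (y i) p q r) l u), ?_, fun e u => ?_, w,
    y l, ?_⟩
  · refine hf.comp fun i => ?_
    by_cases hi : i = l
    · subst hi
      simpa using isTerm_proj 3
    · simpa [Function.update_of_ne hi] using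
        (hM (y i)).app (isTerm_proj (0 : Fin 4)) (isTerm_proj 1) (isTerm_proj 2)
  · simpa only [hidem] using hS.apply_update_const hC hc hf hl e u
  · simpa only [hM012, Function.update_eq_self] using hne

theorem TracesConjunctive.isConjunctive (h : TracesConjunctive C) (hC : IsSelfDualIdem C)
    (hc : IsConservative C) (ht : IsTerm₂ C cycMin) (hv : ¬HasSensitiveTerm C) :
    IsConjunctive C := by
  intro n f hf
  obtain ⟨S, hS⟩ := h n f hf
  refine ⟨S, hS, dependsOn_of_update fun y l hl w => ?_⟩
  by_contra hne
  exact hv (hasSensitiveTerm_of_update_ne hC hc ht (hC.isTerm_iff_mem.2 hf) hS hl hne)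

theorem hasSensitiveTerm_of_hasTernaryTrace_and_or (hC : IsSelfDualIdem C)
    (ht : IsTerm₂ C cycMin) (hG : HasTernaryTrace C fun x y z => x && (y || z)) :
    HasSensitiveTerm C := by
  obtain ⟨g, hg, hgB⟩ := hG
  obtain ⟨M, hM, hMe, hM0⟩ := exists_isTerm₃_apply_eq hC ht 0
  obtain ⟨M', hM', hMe', hM2⟩ := exists_isTerm₃_apply_eq hC ht 2
  have hproj (i : Fin 4) : IsTerm C fun x => x i := isTerm_proj i
  refine ⟨fun x y z w => g (M x y z) (M' x y z) w,
    hg.app (hM.app (hproj 0) (hproj 1) (hproj 2)) (hM'.app (hproj 0) (hproj 1) (hproj 2))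
      (hproj 3), fun e w => ?_, 0, 2, ?_⟩
  · have hedge : ∀ e w : D3, ∃ c b b', e = edge c b ∧ w = edge c b' := by decide
    obtain ⟨c, b, b', rfl, rfl⟩ := hedge e w
    simp only [hMe, hMe', hgB c]
    cases b <;> rfl
  · have h0 : g 0 2 0 = 0 := hgB 2 true false true
    have h2 : g 0 2 2 = 2 := hgB 2 true false false
    simp only [hM0, hM2, h0, h2]
    decide

/-! ### Replacing an operation by its values on edges -/

/-- The trace of `f` accepts the coordinates at which `a` lies in `{v, v + 1}`. -/
def Confines (f : (I → D3) → D3) (v : D3) (a : I → D3) : Prop :=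
  trace f (fun i => decide (a i = v ∨ a i = v + 1)) = true

/-- The trace of `f` determines the value `v` at `a`. For a member `f` of a conservative clone, `v`
is `f a` if `a` lies in a two-element subset, but `v` may exist at other tuples as well. -/
def HasEdgeValue (f : (I → D3) → D3) (v : D3) (a : I → D3) : Prop :=
  Confines f v a ∧ ¬Confines f (v + 1) a

open Classical in
/-- `f` with its values replaced by those that the trace of `f` determines, wherever there are such.
For clones with monotone traces, this map has its values in other clones of the same class. -/
noncomputable def edgeValue (f : (I → D3) → D3) (a : I → D3) : D3 :=
  if h : ∃ v, HasEdgeValue f v a then h.choose else f a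

theorem confines_add_one_iff {f : (I → D3) → D3} {v : D3} {a : I → D3} :
    Confines f (v + 1) (fun i => a i + 1) ↔ Confines f v a := by
  simp only [Confines, add_left_inj]

theorem forall_not_confines_add_one_iff {f : (I → D3) → D3} {a : I → D3} :
    (∀ v, ¬Confines f v fun i => a i + 1) ↔ ∀ v, ¬Confines f v a := by
  rw [← (Equiv.addRight (1 : D3)).forall_congr_right]
  simp only [Equiv.coe_addRight, confines_add_one_iff]

theorem HasEdgeValue.add_one {f : (I → D3) → D3} {v : D3} {a : I → D3} (h : HasEdgeValue f v a) :
    HasEdgeValue f (v + 1) fun i => a i + 1 :=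
  ⟨confines_add_one_iff.2 h.1, mt confines_add_one_iff.1 h.2⟩

theorem HasEdgeValue.edgeValue_eq {f : (I → D3) → D3} {v : D3} {a : I → D3}
    (h : HasEdgeValue f v a) : edgeValue f a = v := by
  have hex : ∃ v, HasEdgeValue f v a := ⟨v, h⟩
  rw [edgeValue, dif_pos hex]
  rcases eq_or_eq_add_one_or_eq_add_one_add_one hex.choose v with hv | hv | hv
  · exact hv
  · exact absurd (hv ▸ hex.choose_spec.1) h.2
  · refine absurd h.1 ?_
    rw [← add_one_add_one_add_one v, ← hv]
    exact hex.choose_spec.2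

theorem isEquivariant_edgeValue {f : (I → D3) → D3} (hf : IsEquivariant f) :
    IsEquivariant (edgeValue f) := by
  intro a
  by_cases h : ∃ v, HasEdgeValue f v a
  · obtain ⟨v, hv⟩ := h
    rw [hv.add_one.edgeValue_eq, hv.edgeValue_eq]
  · have h' : ¬∃ v, HasEdgeValue f v fun i => a i + 1 := by
      rintro ⟨v, hv⟩
      refine h ⟨v + 1 + 1, ?_⟩
      simpa only [add_one_add_one_add_one] using hv.add_one.add_one
    rw [edgeValue, edgeValue, dif_neg h, dif_neg h', hf a]

theorem MinorLE.of_edgeValue (h : ∀ n, ∀ f ∈ C n, edgeValue f ∈ C' n) : MinorLE C C' :=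
  ⟨fun _ => edgeValue, h, fun _ _ _ _ _ => rfl⟩

theorem IsConjunction.confines_iff {f : (I → D3) → D3} {S : Set I}
    (hS : IsConjunction (trace f) S) {v : D3} {a : I → D3} :
    Confines f v a ↔ ∀ i ∈ S, a i = v ∨ a i = v + 1 := by
  rw [Confines, hS]
  simp only [decide_eq_true_eq]

theorem IsConjunction.isMeetOn_edgeValue {f : (I → D3) → D3} {S : Set I}
    (hS : IsConjunction (trace f) S) (hne : S.Nonempty) : IsMeetOn S (edgeValue f) := by
  intro y c hy
  have hc : ∀ c : D3, ¬(c = c + 1 ∨ c = c + 1 + 1) := by decide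
  have hnot (v : D3) (i : I) (hi : i ∈ S) (hyi : y i = v) : ¬Confines f (v + 1) y := fun h =>
    hc v (hyi ▸ hS.confines_iff.1 h i hi)
  by_cases hall : ∀ i ∈ S, y i = c + 1
  · obtain ⟨i, hi⟩ := hne
    have hval : HasEdgeValue f (c + 1) y :=
      ⟨hS.confines_iff.2 fun i hi => Or.inl (hall i hi), hnot _ i hi (hall i hi)⟩
    exact Or.inr ⟨hval.edgeValue_eq, hall⟩
  · push Not at hall
    obtain ⟨i, hi, hyi⟩ := hall
    have hyc := (hy i hi).resolve_right hyi
    have hval : HasEdgeValue f c y := ⟨hS.confines_iff.2 hy, hnot _ i hi hyc⟩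
    exact Or.inl ⟨hval.edgeValue_eq, i, hi, hyc⟩

theorem TracesConjunctive.minorLE (h : TracesConjunctive C) (hC : IsSelfDualIdem C)
    (hC' : IsSelfDualIdem C') (ht : IsTerm₂ C' cycMin) (hv : HasSensitiveTerm C') :
    MinorLE C C' := by
  refine MinorLE.of_edgeValue fun n f hfn => ?_
  obtain ⟨S, hS⟩ := h n f hfn
  have hf := hC.isTerm_iff_mem.2 hfn
  have hne := hS.nonempty hC hf
  obtain ⟨g, hg, hgm, hga⟩ :=
    hv.exists_isMeetOn_eq hC' ht hne (isEquivariant_edgeValue fun x => hC.isTerm_add_one hf x)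
  have heq : g = edgeValue f := by
    funext a
    rcases surjOn_or_exists_edge S a with ha | ⟨c, hac⟩
    · exact hga a ha
    · exact hgm.apply_eq (hS.isMeetOn_edgeValue hne) hac
  exact heq ▸ hC'.isTerm_iff_mem.1 hg

/-! ### Monotone traces and `x ∧ (y ∨ z)` -/

/-- `k` is the result of joining the values `m t`, for `t ∈ T`, and meeting them with `x`, whenever
all of these values lie in a two-element subset. -/
def IsJoinMeet (T : Finset ι) (k x : D3) (m : ι → D3) : Prop :=
  ∀ c (b₀ : Bool) (b : ι → Bool), x = edge c b₀ → (∀ t ∈ T, m t = edge c (b t)) →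
    k = edge c (b₀ && decide (∃ t ∈ T, b t = true))

namespace IsJoinMeet

variable {T : Finset ι} {k x v : D3} {m : ι → D3}

theorem eq_of_exists (h : IsJoinMeet T k x m) (hx : x = v) (hex : ∃ t ∈ T, m t = v)
    (hm : ∀ t ∈ T, m t = v ∨ m t = v + 2) : k = v := by
  have hedge : ∀ v : D3, v = edge (v + 2) true := by decide
  have hedge' (t : ι) (ht : t ∈ T) : m t = edge (v + 2) (decide (m t = v)) := by
    have : ∀ u v : D3, u = v ∨ u = v + 2 → u = edge (v + 2) (decide (u = v)) := by decide
    exact this _ _ (hm t ht)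
  rw [h _ _ _ (hx.trans (hedge v)) hedge']
  simp only [decide_eq_true_eq, hex, decide_true, Bool.and_self, ← hedge]

theorem eq_of_forall (h : IsJoinMeet T k x m) (hx : x = v + 1) (hm : ∀ t ∈ T, m t = v) :
    k = v := by
  simpa using h v true (fun _ => false) hx hm

theorem eq_cycMin_of_forall (h : IsJoinMeet T k x m) (hT : T.Nonempty) (hm : ∀ t ∈ T, m t = v) :
    k = cycMin x v := by
  have hedge : ∀ x v : D3, ∃ c b b', x = edge c b ∧ v = edge c b' := by decide
  obtain ⟨c, b, b', rfl, rfl⟩ := hedge x v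
  rw [h c b (fun _ => b') rfl hm, cycMin_edge]
  obtain ⟨t, ht⟩ := hT
  have : (∃ t ∈ T, b' = true) ↔ b' = true := ⟨fun h => h.choose_spec.2, fun h => ⟨t, ht, h⟩⟩
  simp only [this, Bool.decide_eq_true]

end IsJoinMeet

section Monotone

variable {f : (I → D3) → D3} {i₀ : I} {s : I → Bool} {a : I → D3} {v : D3}

theorem Confines.apply_eq (hle : ∀ s, trace f s = true → s i₀ = true) (h : Confines f v a) :
    a i₀ = v ∨ a i₀ = v + 1 := by
  simpa only [decide_eq_true_eq] using hle _ h

theorem exists_hasEdgeValue_or_forall_not_confines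
    (hle : ∀ s, trace f s = true → s i₀ = true) (a : I → D3) :
    (∃ v, HasEdgeValue f v a) ∨ ∀ v, ¬Confines f v a := by
  by_contra! h
  obtain ⟨hnot, u, hu⟩ := h
  simp only [HasEdgeValue, not_and_not_right] at hnot
  have hu₁ := hnot u hu
  have hu₂ := hnot _ hu₁
  have hempty : ∀ u x : D3, (x = u ∨ x = u + 1) → (x = u + 1 ∨ x = u + 1 + 1) →
      (x = u + 1 + 1 ∨ x = u + 1 + 1 + 1) → False := by decide
  exact hempty u (a i₀) (hu.apply_eq hle) (hu₁.apply_eq hle) (hu₂.apply_eq hle)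

theorem Confines.of_forall (hmono : Monotone (trace f)) (hs : trace f s = true)
    (h : ∀ i, s i = true → a i = v ∨ a i = v + 1) : Confines f v a :=
  hmono (show s ≤ _ from fun i hi => by simpa using h i hi) hs

variable {m : (I → D3) → D3}

theorem IsMeetOn.apply_eq_or_of_hasEdgeValue (hmono : Monotone (trace f)) (hs : trace f s = true)
    (hm : IsMeetOn {i | s i = true} m) (hmc : Set.SurjOn a {i | s i = true} Set.univ → m a = v)
    (hv : HasEdgeValue f v a) : m a = v ∨ m a = v + 2 ∧ Confines f (v + 2) a := by
  rcases surjOn_or_exists_edge {i | s i = true} a with ha | ⟨d, had⟩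
  · exact Or.inl (hmc ha)
  have hd : Confines f d a := Confines.of_forall hmono hs had
  have hdv : d ≠ v + 1 := fun h => hv.2 (h ▸ hd)
  rcases hm a d had with ⟨hma, -⟩ | ⟨hma, hall⟩
  · have hcases : ∀ d v : D3, d ≠ v + 1 → d = v ∨ d = v + 2 := by decide
    rcases hcases d v hdv with rfl | rfl
    · exact Or.inl hma
    · exact Or.inr ⟨hma, hd⟩
  · have hd1 : Confines f (d + 1) a := Confines.of_forall hmono hs fun i hi => Or.inl (hall i hi)
    have hcases : ∀ d v : D3, d ≠ v + 1 → d + 1 ≠ v + 1 → d + 1 = v := by decide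
    exact Or.inl (hma.trans (hcases d v hdv fun h => hv.2 (h ▸ hd1)))

theorem IsMeetOn.apply_eq_of_hasEdgeValue (hmono : Monotone (trace f))
    (hm : IsMeetOn {i | decide (a i = v ∨ a i = v + 1) = true} m) (hv : HasEdgeValue f v a) :
    m a = v := by
  have hmem (i : I) (hi : i ∈ {i | decide (a i = v ∨ a i = v + 1) = true}) :
      a i = v ∨ a i = v + 1 := of_decide_eq_true hi
  rcases hm a v hmem with ⟨hma, -⟩ | ⟨-, hall⟩
  · exact hma
  · exact absurd (Confines.of_forall hmono hv.1 fun i hi => Or.inl (hall i hi)) hv.2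

theorem surjOn_of_forall_not_confines (hmono : Monotone (trace f)) (hs : trace f s = true)
    (ha : ∀ v, ¬Confines f v a) : Set.SurjOn a {i | s i = true} Set.univ :=
  (surjOn_or_exists_edge _ a).resolve_right fun ⟨d, had⟩ =>
    ha d (Confines.of_forall hmono hs had)

theorem exists_isTerm_monotone [Finite I] (hC : IsSelfDualIdem C) (ht : IsTerm₂ C cycMin)
    (hG : HasTernaryTrace C fun x y z => x && (y || z)) (hmono : Monotone (trace f))
    (hf : ∃ s, trace f s = true) (hle : ∀ s, trace f s = true → s i₀ = true)
    {X c : (I → D3) → D3} (hX : IsTerm C X) (hc : IsEquivariant c)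
    (hXc : ∀ a v, HasEdgeValue f v a → (X a = a i₀ ∨ X a = v) ∧ c a = v) :
    ∃ Y : (I → D3) → D3, IsTerm C Y ∧ (∀ a v, HasEdgeValue f v a → Y a = v) ∧
      ∀ a, (∀ v, ¬Confines f v a) → Y a = cycMin (X a) (c a) := by
  have hmeet (s : I → Bool) (hs : trace f s = true) :
      ∃ m : (I → D3) → D3, IsTerm C m ∧ IsMeetOn {i | s i = true} m ∧
        ∀ a, Set.SurjOn a {i | s i = true} Set.univ → m a = c a :=
    (hasSensitiveTerm_of_hasTernaryTrace_and_or hC ht hG).exists_isMeetOn_eq hC ht ⟨i₀, hle s hs⟩ hc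
  choose! m hm hmS hmc using hmeet
  let T : Finset (I → Bool) := (Set.toFinite {s | trace f s = true}).toFinset
  have hT (s : I → Bool) : s ∈ T ↔ trace f s = true := by simp [T]
  have hTne : T.Nonempty := hf.imp fun s hs => (hT s).2 hs
  obtain ⟨g, hg, hgB⟩ := hG
  obtain ⟨Y, hY, hYe⟩ := exists_isTerm_join hg hgB hTne hX fun s hs => hm s ((hT s).1 hs)
  have hYm (a : I → D3) : IsJoinMeet T (Y a) (X a) fun s => m s a := hYe a
  refine ⟨Y, hY, fun a v hv => ?_, fun a ha => (hYm a).eq_cycMin_of_forall hTne fun s hs =>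
    hmc s ((hT s).1 hs) a (surjOn_of_forall_not_confines hmono ((hT s).1 hs) ha)⟩
  obtain ⟨hXa, hca⟩ := hXc a v hv
  have hval (s : I → Bool) (hs : s ∈ T) : m s a = v ∨ m s a = v + 2 ∧ Confines f (v + 2) a :=
    (hmS s ((hT s).1 hs)).apply_eq_or_of_hasEdgeValue hmono ((hT s).1 hs)
      (fun h => (hmc s ((hT s).1 hs) a h).trans hca) hv
  by_cases hXv : X a = v
  · exact (hYm a).eq_of_exists hXv
      ⟨_, (hT _).2 hv.1, (hmS _ hv.1).apply_eq_of_hasEdgeValue hmono hv⟩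
      fun s hs => (hval s hs).imp_right And.left
  · have hXi := hXa.resolve_right hXv
    have hai : a i₀ = v + 1 := (hv.1.apply_eq hle).resolve_left (hXi ▸ hXv)
    refine (hYm a).eq_of_forall (hXi.trans hai) fun s hs => (hval s hs).resolve_right fun h => ?_
    have hdisj : ∀ v : D3, ¬(v + 1 = v + 2 ∨ v + 1 = v + 2 + 1) := by decide
    exact hdisj v (hai ▸ h.2.apply_eq hle)

end Monotone

open Classical in
/-- Agrees with `edgeValue f` except at some tuples whose values the trace does not determine. There
`X a` becomes `edgeValue f a` by meeting it first with this operation and then with `edgeValue f`: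
from `edgeValue f a + 2`, a single meet with `edgeValue f a` would not change it. -/
noncomputable def edgeValueCorrection (f : (I → D3) → D3) (X : (I → D3) → D3) (a : I → D3) : D3 :=
  if (∀ v, ¬Confines f v a) ∧ X a = edgeValue f a + 2 then edgeValue f a + 1 else edgeValue f a

theorem isEquivariant_edgeValueCorrection (hf : IsEquivariant f) {X : (I → D3) → D3}
    (hX : IsEquivariant X) : IsEquivariant (edgeValueCorrection f X) := by
  intro a
  have hiff : ((∀ v, ¬Confines f v fun i => a i + 1) ∧
      X (fun i => a i + 1) = edgeValue f (fun i => a i + 1) + 2) ↔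
      (∀ v, ¬Confines f v a) ∧ X a = edgeValue f a + 2 := by
    rw [forall_not_confines_add_one_iff, hX a, isEquivariant_edgeValue hf a, add_right_comm,
      add_left_inj]
  by_cases h : (∀ v, ¬Confines f v a) ∧ X a = edgeValue f a + 2
  · rw [edgeValueCorrection, edgeValueCorrection, if_pos h, if_pos (hiff.2 h),
      isEquivariant_edgeValue hf a]
  · rw [edgeValueCorrection, edgeValueCorrection, if_neg h, if_neg (mt hiff.1 h),
      isEquivariant_edgeValue hf a]

theorem TracesMonotone.minorLE (h : TracesMonotone C) (hd : TracesDominated C)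
    (hC : IsSelfDualIdem C) (hC' : IsSelfDualIdem C') (ht : IsTerm₂ C' cycMin)
    (hG : HasTernaryTrace C' fun x y z => x && (y || z)) : MinorLE C C' := by
  refine MinorLE.of_edgeValue fun n f hfn => ?_
  have hf := hC.isTerm_iff_mem.2 hfn
  have hadd : IsEquivariant f := fun x => hC.isTerm_add_one hf x
  have hmono := h n f hfn
  obtain ⟨i₀, hle⟩ := hd n f hfn
  have htrue : ∃ s, trace f s = true := ⟨_, trace_const_true hC hf⟩
  have hproj : IsEquivariant fun x : Fin n → D3 => x i₀ := fun _ => rfl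
  obtain ⟨Y, hY, hYv, hYs⟩ := exists_isTerm_monotone hC' ht hG hmono htrue hle (isTerm_proj i₀)
    (isEquivariant_edgeValueCorrection hadd hproj) fun a v hv =>
      ⟨Or.inl rfl, (if_neg fun h => h.1 v hv.1).trans hv.edgeValue_eq⟩
  obtain ⟨Z, hZ, hZv, hZs⟩ := exists_isTerm_monotone hC' ht hG hmono htrue hle hY
    (isEquivariant_edgeValue hadd) fun a v hv => ⟨Or.inr (hYv a v hv), hv.edgeValue_eq⟩
  have heq : Z = edgeValue f := by
    funext a
    rcases exists_hasEdgeValue_or_forall_not_confines hle a with ⟨v, hv⟩ | ha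
    · rw [hZv a v hv, hv.edgeValue_eq]
    · have hmeet : ∀ x e : D3, cycMin (cycMin x (if x = e + 2 then e + 1 else e)) e = e := by
        decide
      rw [hZs a ha, hYs a ha, edgeValueCorrection]
      simp only [ha, not_false_eq_true, implies_true, true_and, hmeet]
  exact heq ▸ hC'.isTerm_iff_mem.1 hZ

/-! ### Classification -/

theorem countable_minorClass_union {K L : Set OpFamily} (hK : (minorClass '' K).Countable)
    (hL : (minorClass '' L).Countable) : (minorClass '' (K ∪ L)).Countable :=
  Set.image_union minorClass K L ▸ hK.union hL

theorem countable_minorClass_isTerm₂_cycMin :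
    (minorClass '' {C | IsSelfDualIdem C ∧ IsConservative C ∧ IsTerm₂ C cycMin}).Countable := by
  have hand_imp := countable_minorClass_of_minorLE
    (K := {C | IsSelfDualIdem C ∧ IsConservative C ∧ IsTerm₂ C cycMin ∧ TracesDominated C ∧
      HasTernaryTrace C fun x y z => x && (!y || z)})
    fun C ⟨hC, hc, _, hd, _⟩ C' ⟨hC', _, ht, _, hJ⟩ =>
      MinorLE.of_subset (hc.subset_of_tracesDominated hC hC' hd ht hJ)
  have hand_or := countable_minorClass_of_minorLE
    (K := {C | IsSelfDualIdem C ∧ IsTerm₂ C cycMin ∧ TracesDominated C ∧ TracesMonotone C ∧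
      HasTernaryTrace C fun x y z => x && (y || z)})
    fun C ⟨hC, _, hd, hm, _⟩ C' ⟨hC', ht, _, _, hG⟩ => hm.minorLE hd hC hC' ht hG
  have hsensitive := countable_minorClass_of_minorLE
    (K := {C | IsSelfDualIdem C ∧ IsTerm₂ C cycMin ∧ TracesConjunctive C ∧ HasSensitiveTerm C})
    fun C ⟨hC, _, h, _⟩ C' ⟨hC', ht, _, hv⟩ => h.minorLE hC hC' ht hv
  have hconj := countable_minorClass_of_minorLE
    (K := {C | IsSelfDualIdem C ∧ IsConservative C ∧ IsTerm₂ C cycMin ∧ IsConjunctive C})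
    fun C ⟨hC, hc, _, hp⟩ C' ⟨hC', _, ht, _⟩ => MinorLE.of_subset (hp.subset hC hC' hc ht)
  refine (countable_minorClass_union (countable_minorClass_union (countable_minorClass_union
    (countable_minorClass_union countable_minorClass_hasNearUnanimity hand_imp) hand_or)
    hsensitive) hconj).mono (Set.image_mono ?_)
  rintro C ⟨hC, hc, ht⟩
  by_cases hd : TracesDominated C
  swap
  · exact .inl (.inl (.inl (.inl ⟨hC, hasNearUnanimity_of_not_tracesDominated hC hc ht hd⟩)))
  by_cases hm : TracesMonotone C
  swap
  · exact .inl (.inl (.inl (.inr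
      ⟨hC, hc, ht, hd, hasTernaryTrace_and_imp_of_not_tracesMonotone hC hc ht hd hm⟩)))
  by_cases h : TracesConjunctive C
  swap
  · exact .inl (.inl (.inr
      ⟨hC, ht, hd, hm, hasTernaryTrace_and_or_of_not_tracesConjunctive hC hc ht hm h⟩))
  by_cases hv : HasSensitiveTerm C
  · exact .inl (.inr ⟨hC, ht, h, hv⟩)
  · exact .inr ⟨hC, hc, ht, h.isConjunctive hC hc ht hv⟩

theorem isConservative_negConj (hC : IsSelfDualIdem C) (hc : IsConservative C) :
    IsConservative (negConj C) := by
  intro n f hf x hx hfx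
  have hneg : ∀ y : D3, y = 0 ∨ y = 1 → -y + 1 = 0 ∨ -y + 1 = 1 := by decide
  refine hc n _ hf (fun i => -x i + 1) (fun i => hneg _ (hx i)) ?_
  rw [hC.add_one _ hf]
  simp only [neg_neg, hfx]
  rfl

theorem isTerm₂_cycMin_negConj (hC : IsSelfDualIdem C) (ht : IsTerm₂ C cycMax) :
    IsTerm₂ (negConj C) cycMin := by
  refine (isSelfDualIdem_negConj hC).isTerm_iff_mem.2 ?_
  have hneg : ∀ x y : D3, -cycMin (-x) (-y) = cycMax x y := by decide
  simpa only [negConj, Set.mem_ofPred_eq, hneg] using hC.isTerm_iff_mem.1 ht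

theorem countable_minorClass_isTerm₂_cycMax :
    (minorClass '' {C | IsSelfDualIdem C ∧ IsConservative C ∧ IsTerm₂ C cycMax}).Countable := by
  refine countable_minorClass_isTerm₂_cycMin.mono ?_
  rintro _ ⟨C, ⟨hC, hc, ht⟩, rfl⟩
  exact ⟨negConj C, ⟨isSelfDualIdem_negConj hC, isConservative_negConj hC hc,
    isTerm₂_cycMin_negConj hC ht⟩, minorClass_negConj⟩

theorem countable_minorClass_binaryTermsAreProj :
    (minorClass ''
      {C | IsSelfDualIdem C ∧ IsConservative C ∧ BinaryTermsAreProj C}).Countable := by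
  have hpair := countable_minorClass_of_minorLE
    (K := {C | IsSelfDualIdem C ∧ ∀ g, IsTerm₃ C g → IsPairProj g})
    fun C ⟨hC, h⟩ C' ⟨hC', _⟩ => MinorLE.of_isPairProj hC hC' h
  have hminority := countable_minorClass_of_minorLE
    (K := {C | IsSelfDualIdem C ∧ IsConservative C ∧
      (∀ g, IsTerm₃ C g → IsMinority g ∨ IsPairProj g) ∧ ∃ p, IsTerm₃ C p ∧ IsMinority p})
    fun C ⟨hC, hc, h, _⟩ C' ⟨hC', _, _, _, hp, hm⟩ => MinorLE.of_isMinority hC hC' hc h hp hm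
  refine (countable_minorClass_union (countable_minorClass_union
    countable_minorClass_hasNearUnanimity hpair) hminority).mono (Set.image_mono ?_)
  rintro C ⟨hC, hc, hs⟩
  by_cases hnu : HasNearUnanimity C 2
  · exact .inl (.inl ⟨hC, 2, hnu⟩)
  have h (g : D3 → D3 → D3 → D3) (hg : IsTerm₃ C g) : IsMinority g ∨ IsPairProj g :=
    hs.isMinority_or_isPairProj hC hnu hg
  by_cases hp : ∃ p, IsTerm₃ C p ∧ IsMinority p
  · exact .inr ⟨hC, hc, h, hp⟩
  · exact .inl (.inr ⟨hC, fun g hg => (h g hg).resolve_left fun hm => hp ⟨g, hg, hm⟩⟩)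

theorem countable_minorClass_not_isConservative :
    (minorClass '' {C | IsSelfDualIdem C ∧ ¬IsConservative C}).Countable := by
  have haffine := countable_minorClass_of_minorLE (K := {C | IsSelfDualIdem C ∧ IsAffine C})
    fun C ⟨hC, h⟩ C' ⟨hC', h'⟩ => MinorLE.of_subset (h.subset hC hC' h')
  refine (countable_minorClass_union countable_minorClass_hasNearUnanimity haffine).mono
    (Set.image_mono ?_)
  rintro C ⟨hC, hc⟩
  by_cases h : IsAffine C
  · exact .inr ⟨hC, h⟩
  · exact .inl ⟨hC, 2, hasNearUnanimity_of_not_isAffine hC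
      (hC.isTerm₂_avg_of_not_isConservative hc) h⟩

theorem countable_minorClass_isSelfDualIdem :
    (minorClass '' {C | IsSelfDualIdem C}).Countable := by
  refine (countable_minorClass_union (countable_minorClass_union (countable_minorClass_union
    countable_minorClass_isTerm₂_cycMin countable_minorClass_isTerm₂_cycMax)
    countable_minorClass_binaryTermsAreProj) countable_minorClass_not_isConservative).mono
    (Set.image_mono fun C (hC : IsSelfDualIdem C) => ?_)
  by_cases hc : IsConservative C
  · rcases hc.cycMin_or_cycMax_or_proj hC with h | h | h
    · exact .inl (.inl (.inl ⟨hC, hc, h⟩))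
    · exact .inl (.inl (.inr ⟨hC, hc, h⟩))
    · exact .inl (.inr ⟨hC, hc, h⟩)
  · exact .inr ⟨hC, hc⟩

/-- The clones of operations that preserve `C₃`. -/
def selfDualClones : Set OpFamily := {C | IsClone C ∧ ∀ n, ∀ f ∈ C n, Preserves f C3rel}

theorem selfDualClones_nonempty : selfDualClones.Nonempty := by
  refine ⟨_, isClone_proj, ?_⟩
  rintro n _ ⟨i, rfl⟩ t ht
  exact ht i

theorem countable_minorClass_selfDualClones : (minorClass '' selfDualClones).Countable := by
  refine countable_minorClass_isSelfDualIdem.mono ?_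
  rintro _ ⟨C, ⟨hC, hsd⟩, rfl⟩
  have hadd {n : ℕ} (f : Op n) (hf : f ∈ C n) := add_one_of_preserves_C3rel (hsd n f hf)
  exact ⟨idemPart C, isSelfDualIdem_idemPart hC hadd, minorClass_idemPart hC hadd⟩

end SelfDualClone

/-- There is a countable family of clones on `{0,1,2}` such that every clone of
self-dual operations (operations preserving `C₃`) is minor equivalent to some member. -/
theorem stmt5 :
    ∃ Dfam : ℕ → (∀ n, Set (Op n)),
      (∀ i, IsClone (Dfam i)) ∧
      (∀ C : ∀ n, Set (Op n), IsClone C → (∀ n, ∀ f ∈ C n, Preserves f C3rel) →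
        ∃ i, MinorEquivalent C (Dfam i)) := by
  obtain ⟨D, hD, hCD⟩ := SelfDualClone.exists_nat_family_of_countable
    SelfDualClone.selfDualClones_nonempty SelfDualClone.countable_minorClass_selfDualClones
  exact ⟨D, fun i => (hD i).1, fun C hC hsd => hCD C ⟨hC, hsd⟩⟩
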